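/- arXiv:1608.08913 — 4 statements merged into one kernel-verified Lean document; each statement's English description precedes it below -/
import Mathlib

section
/- Let h>0, 0<s<1. Then there exist constants 0<c_s≤C_s, depending only on s, such that for every m∈ℤ∖{0}: c_s/(h^{2s}|m|^{1+2s}) ≤ K_s^h(m) ≤ C_s/(h^{2s}|m|^{1+2s}). -/
/-- The kernel of the fractional discrete Laplacian on the mesh of size `h`:
`K_s^h(m) = (4^s Γ(1/2+s)/(√π |Γ(-s)|)) · Γ(|m|-s)/(h^{2s} Γ(|m|+1+s))` for `m ≠ 0`,
with `|Γ(-s)| = Γ(1-s)/s`, and `K_s^h(0) = 0`. -/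
noncomputable def Ksh (h s : ℝ) (m : ℤ) : ℝ :=
  if m = 0 then 0 else
    ((4 : ℝ) ^ s * Real.Gamma (1/2 + s) / (Real.sqrt Real.pi * (Real.Gamma (1 - s) / s))) *
      (Real.Gamma (|(m : ℝ)| - s) / (h ^ (2 * s) * Real.Gamma (|(m : ℝ)| + 1 + s)))

theorem wendel_aux {x t : ℝ} (hx : 0 < x) (ht : 0 < t) (ht1 : t < 1) :
    Real.Gamma (x + t) ≤ x ^ t * Real.Gamma x := by
  have h := Real.Gamma_mul_add_mul_le_rpow_Gamma_mul_rpow_Gamma (s := x) (t := x + 1)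
    (a := 1 - t) (b := t) hx (by linarith) (by linarith) ht (by ring)
  have hG := Real.Gamma_pos_of_pos hx
  rw [Real.Gamma_add_one hx.ne', Real.mul_rpow hx.le hG.le] at h
  have e : (1 - t) * x + t * (x + 1) = x + t := by ring
  rw [e] at h
  refine h.trans (le_of_eq ?_)
  have : Real.Gamma x ^ (1 - t) * Real.Gamma x ^ t = Real.Gamma x := by
    rw [← Real.rpow_add hG]; simp
  calc _ = x ^ t * (Real.Gamma x ^ (1 - t) * Real.Gamma x ^ t) := by ring
    _ = _ := by rw [this]

theorem ratio_aux {n s : ℝ} (hs0 : 0 < s) (hs1 : s < 1) (hn : 1 ≤ n) :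
    (1 / 2) / n ^ (1 + 2 * s) ≤ Real.Gamma (n - s) / Real.Gamma (n + 1 + s) ∧
    Real.Gamma (n - s) / Real.Gamma (n + 1 + s) ≤ (1 / (1 - s)) / n ^ (1 + 2 * s) := by
  have hn0 : 0 < n := by linarith
  have hns : 0 < n - s := by linarith
  have hG := Real.Gamma_pos_of_pos hn0
  have hGm := Real.Gamma_pos_of_pos hns
  have hGp : 0 < Real.Gamma (n + 1 + s) := Real.Gamma_pos_of_pos (by linarith)
  have hGs : 0 < Real.Gamma (n + s) := Real.Gamma_pos_of_pos (by linarith)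
  have hp : 0 < n ^ s := Real.rpow_pos_of_pos hn0 s
  have epow : n ^ (1 + 2 * s) = n * n ^ s * n ^ s := by
    rw [show 1 + 2 * s = 1 + s + s by ring, Real.rpow_add hn0, Real.rpow_add hn0, Real.rpow_one]
  have eG : Real.Gamma (n + 1 + s) = (n + s) * Real.Gamma (n + s) := by
    rw [show n + 1 + s = (n + s) + 1 by ring, Real.Gamma_add_one (by linarith)]
  -- lower bound for Γ(n-s)
  have h1 : Real.Gamma n ≤ n ^ s * Real.Gamma (n - s) := by
    have h := wendel_aux hns hs0 hs1
    rw [sub_add_cancel] at h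
    refine h.trans ?_
    have := Real.rpow_le_rpow hns.le (by linarith : n - s ≤ n) hs0.le
    gcongr
  -- upper bound for Γ(n-s)
  have h2 : (1 - s) * (n ^ s * Real.Gamma (n - s)) ≤ Real.Gamma n := by
    have h := wendel_aux (t := 1 - s) hn0 (by linarith) (by linarith)
    rw [show n + (1 - s) = (n - s) + 1 by ring, Real.Gamma_add_one hns.ne',
      Real.rpow_sub hn0, Real.rpow_one] at h
    have h' : (n - s) * Real.Gamma (n - s) * n ^ s ≤ n * Real.Gamma n := by
      calc _ ≤ n / n ^ s * Real.Gamma n * n ^ s := by gcongr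
        _ = _ := by field_simp
    have h3 : n * (1 - s) ≤ n - s := by nlinarith
    have h4 : n * ((1 - s) * (n ^ s * Real.Gamma (n - s))) ≤ n * Real.Gamma n := by
      calc _ = (n * (1 - s)) * (Real.Gamma (n - s) * n ^ s) := by ring
        _ ≤ (n - s) * (Real.Gamma (n - s) * n ^ s) := by gcongr
        _ ≤ _ := by linarith
    exact le_of_mul_le_mul_left h4 hn0
  have h5 : Real.Gamma (n + 1 + s) ≤ 2 * n * (n ^ s * Real.Gamma n) := by
    rw [eG]
    have h := wendel_aux hn0 hs0 hs1
    have : n + s ≤ 2 * n := by linarith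
    gcongr
  have h6 : n * n ^ s * Real.Gamma n ≤ Real.Gamma (n + 1 + s) := by
    have hq : 0 < n + s := by linarith
    have h := wendel_aux (t := 1 - s) hq (by linarith) (by linarith)
    rw [show n + s + (1 - s) = n + 1 by ring, Real.Gamma_add_one hn0.ne',
      Real.rpow_sub hq, Real.rpow_one] at h
    have hqp : 0 < (n + s) ^ s := Real.rpow_pos_of_pos hq s
    have hle := Real.rpow_le_rpow hn0.le (by linarith : n ≤ n + s) hs0.le
    rw [eG]
    calc n * n ^ s * Real.Gamma n = (n * Real.Gamma n) * n ^ s := by ring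
      _ ≤ (n + s) / (n + s) ^ s * Real.Gamma (n + s) * (n + s) ^ s := by gcongr
      _ = _ := by field_simp
  have hs' : 0 < 1 - s := by linarith
  rw [epow]
  constructor
  · rw [div_le_div_iff₀ (by positivity) hGp]
    have : 2 * n * (n ^ s * Real.Gamma n) ≤ 2 * n * (n ^ s * (n ^ s * Real.Gamma (n - s))) := by
      gcongr
    linarith
  · rw [div_le_div_iff₀ hGp (by positivity), div_mul_eq_mul_div, le_div_iff₀ hs']
    have : n * n ^ s * ((1 - s) * (n ^ s * Real.Gamma (n - s))) ≤ n * n ^ s * Real.Gamma n := by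
      gcongr
    linarith

theorem kernel_two_sided_estimate (s : ℝ) (hs0 : 0 < s) (hs1 : s < 1) :
    ∃ c C : ℝ, 0 < c ∧ c ≤ C ∧ ∀ h : ℝ, 0 < h → ∀ m : ℤ, m ≠ 0 →
      c / (h ^ (2 * s) * |(m : ℝ)| ^ (1 + 2 * s)) ≤ Ksh h s m ∧
      Ksh h s m ≤ C / (h ^ (2 * s) * |(m : ℝ)| ^ (1 + 2 * s)) := by
  have hs' : 0 < 1 - s := by linarith
  obtain ⟨A, hA⟩ : ∃ A : ℝ, A = (4 : ℝ) ^ s * Real.Gamma (1/2 + s) /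
      (Real.sqrt Real.pi * (Real.Gamma (1 - s) / s)) := ⟨_, rfl⟩
  have hA0 : 0 < A := by
    have h1 := Real.Gamma_pos_of_pos hs'
    have h2 : 0 < Real.Gamma (1/2 + s) := Real.Gamma_pos_of_pos (by linarith)
    have h3 := Real.pi_pos
    rw [hA]; positivity
  refine ⟨A * (1 / 2), A * (1 / (1 - s)), by positivity, ?_, ?_⟩
  · have : 1 - s ≤ 2 := by linarith
    gcongr
  · intro h hh m hm
    have hn : 1 ≤ |(m : ℝ)| := by exact_mod_cast Int.one_le_abs hm
    obtain ⟨h1, h2⟩ := ratio_aux hs0 hs1 hn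
    have hH : 0 < h ^ (2 * s) := Real.rpow_pos_of_pos hh _
    have e : ∀ a b : ℝ, A * a / (h ^ (2 * s) * b) = A / h ^ (2 * s) * (a / b) := by
      intro a b; rw [mul_div_mul_comm]
    have hK : Ksh h s m = A / h ^ (2 * s) *
        (Real.Gamma (|(m : ℝ)| - s) / Real.Gamma (|(m : ℝ)| + 1 + s)) := by
      rw [Ksh, if_neg hm, ← hA, ← mul_div_assoc, e]
    rw [hK, e, e]
    constructor <;> gcongr
end

section
/- Let h>0 and u:ℤ→ℝ satisfy Σ_{m∈ℤ} |u_m|/(1+|m|) < ∞. Then for every j∈ℤ, lim_{s→0⁺} (-Δ_h)^s u_j = u_j, where (-Δ_h)^s u_j = Σ_{m∈ℤ, m≠j} (u_j−u_m)·K_s^h(j−m) (the series converges absolutely under the stated hypothesis for each 0<s<1). -/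
/-- The fractional discrete Laplacian `(-Δ_h)^s u_j = Σ_{m ≠ j} (u_j - u_m) K_s^h(j-m)`;
since `K_s^h(0) = 0` the sum may be taken over all of `ℤ`. -/
noncomputable def fracLap (h s : ℝ) (u : ℤ → ℝ) (j : ℤ) : ℝ :=
  ∑' m : ℤ, (u j - u m) * Ksh h s (j - m)

lemma hasSum_of_eq {f g : ℕ → ℝ} {a : ℝ} (hg : HasSum g a) (hfg : ∀ n, f n = g n) :
    HasSum f a := by
  rw [funext hfg]; exact hg

/-- The Gamma quotient at `n + 1`. -/
noncomputable def auxG (s : ℝ) (n : ℕ) : ℝ :=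
  Real.Gamma ((n : ℝ) + 1 - s) / Real.Gamma ((n : ℝ) + 2 + s)

/-- The telescoping sequence at `n + 1`. -/
noncomputable def auxA (s : ℝ) (n : ℕ) : ℝ :=
  Real.Gamma ((n : ℝ) + 1 - s) / Real.Gamma ((n : ℝ) + 1 + s)

/-- The constant in front of the kernel. -/
noncomputable def auxC (h s : ℝ) : ℝ :=
  ((4 : ℝ) ^ s * Real.Gamma (1/2 + s) / (Real.sqrt Real.pi * (Real.Gamma (1 - s) / s))) / h ^ (2 * s)

lemma auxG_pos {s : ℝ} (h0 : 0 < s) (h1 : s < 1) (n : ℕ) : 0 < auxG s n := by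
  have hn : (0 : ℝ) ≤ n := n.cast_nonneg
  exact div_pos (Real.Gamma_pos_of_pos (by linarith)) (Real.Gamma_pos_of_pos (by linarith))

lemma auxA_pos {s : ℝ} (h0 : 0 < s) (h1 : s < 1) (n : ℕ) : 0 < auxA s n := by
  have hn : (0 : ℝ) ≤ n := n.cast_nonneg
  exact div_pos (Real.Gamma_pos_of_pos (by linarith)) (Real.Gamma_pos_of_pos (by linarith))

lemma auxG_eq {s : ℝ} (h0 : 0 < s) (n : ℕ) :
    auxG s n = auxA s n / ((n : ℝ) + 1 + s) := by
  have hn : (0 : ℝ) ≤ n := n.cast_nonneg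
  unfold auxG auxA
  rw [show (n : ℝ) + 2 + s = (n + 1 + s) + 1 by ring, Real.Gamma_add_one (by positivity),
    div_div, mul_comm]

lemma auxA_succ {s : ℝ} (h0 : 0 < s) (h1 : s < 1) (n : ℕ) :
    auxA s (n + 1) = ((n : ℝ) + 1 - s) * auxG s n := by
  have hn : (0 : ℝ) ≤ n := n.cast_nonneg
  unfold auxG auxA
  push_cast
  rw [show (n : ℝ) + 1 + 1 - s = (n + 1 - s) + 1 by ring, Real.Gamma_add_one (by linarith),
    show (n : ℝ) + 1 + 1 + s = n + 2 + s by ring, mul_div_assoc]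

lemma auxA_sub {s : ℝ} (h0 : 0 < s) (h1 : s < 1) (n : ℕ) :
    auxA s n - auxA s (n + 1) = 2 * s * auxG s n := by
  have hn : (0 : ℝ) ≤ n := n.cast_nonneg
  have e : auxA s n = auxG s n * ((n : ℝ) + 1 + s) := by
    rw [auxG_eq h0, div_mul_cancel₀]; positivity
  rw [auxA_succ h0 h1, e]; ring

lemma sum_auxG {s : ℝ} (h0 : 0 < s) (h1 : s < 1) (N : ℕ) :
    ∑ n ∈ Finset.range N, 2 * s * auxG s n = auxA s 0 - auxA s N := by
  rw [← Finset.sum_range_sub']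
  exact Finset.sum_congr rfl fun n _ => (auxA_sub h0 h1 n).symm

lemma summable_auxG {s : ℝ} (h0 : 0 < s) (h1 : s < 1) :
    Summable fun n => 2 * s * auxG s n := by
  refine summable_of_sum_range_le (c := auxA s 0) (fun n => ?_) fun N => ?_
  · have := auxG_pos h0 h1 n; positivity
  · rw [sum_auxG h0 h1]; linarith [auxA_pos h0 h1 N]

lemma auxA_tendsto {s : ℝ} (h0 : 0 < s) (h1 : s < 1) :
    Filter.Tendsto (auxA s) Filter.atTop (nhds 0) := by
  have hs := (summable_auxG h0 h1)
  have ht := hs.hasSum.tendsto_sum_nat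
  have hL : Filter.Tendsto (auxA s) Filter.atTop
      (nhds (auxA s 0 - ∑' n, 2 * s * auxG s n)) := by
    have := ht.const_sub (auxA s 0)
    refine this.congr fun N => ?_
    rw [sum_auxG h0 h1]; ring
  set L := auxA s 0 - ∑' n, 2 * s * auxG s n
  have hanti : Antitone (auxA s) := antitone_nat_of_succ_le fun n => by
    have := auxA_sub h0 h1 n
    have := auxG_pos h0 h1 n
    have : 0 < 2 * s * auxG s n := by positivity
    linarith
  have hle : ∀ n, L ≤ auxA s n := fun n => hanti.le_of_tendsto hL n
  have hL0 : 0 ≤ L := ge_of_tendsto' hL fun n => (auxA_pos h0 h1 n).le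
  rcases hL0.eq_or_lt with h | h
  · rwa [← h] at hL
  · exfalso
    have h2 : Summable fun n : ℕ => 1 / ((n + 2 : ℕ) : ℝ) := by
      refine Summable.of_nonneg_of_le (fun n => by positivity) (fun n => ?_)
        (hs.mul_left (1 / (2 * s * L)))
      have hn : (0 : ℝ) ≤ n := n.cast_nonneg
      have : 1 / (2 * s * L) * (2 * s * auxG s n) = auxG s n / L := by field_simp
      rw [this, auxG_eq h0, div_div, div_le_div_iff₀ (by positivity) (by positivity)]
      have := hle n
      push_cast
      nlinarith
    exact Real.not_summable_one_div_natCast ((summable_nat_add_iff 2).1 h2)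

lemma hasSum_auxG {s : ℝ} (h0 : 0 < s) (h1 : s < 1) :
    HasSum (auxG s) (auxA s 0 / (2 * s)) := by
  have h := (summable_auxG h0 h1).hasSum
  have ht := h.tendsto_sum_nat
  have h2 : Filter.Tendsto (fun N => ∑ n ∈ Finset.range N, 2 * s * auxG s n) Filter.atTop
      (nhds (auxA s 0)) := by
    have := (auxA_tendsto h0 h1).const_sub (auxA s 0)
    rw [sub_zero] at this
    exact this.congr fun N => (sum_auxG h0 h1 N).symm
  rw [tendsto_nhds_unique ht h2] at h
  have := h.div_const (2 * s)
  refine hasSum_of_eq this ?_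
  intro n
  field_simp

lemma auxG_le {s : ℝ} (h0 : 0 < s) (h1 : s < 1) (n : ℕ) :
    ((n : ℝ) + 1) * auxG s n ≤ auxG s 0 := by
  induction n with
  | zero => simp
  | succ n ih =>
    have hn : (0 : ℝ) ≤ n := n.cast_nonneg
    have hG := auxG_pos h0 h1 n
    refine le_trans ?_ ih
    rw [auxG_eq h0 (n + 1), auxA_succ h0 h1]
    push_cast
    rw [← mul_div_assoc, div_le_iff₀ (by positivity)]
    have : ((n : ℝ) + 1 + 1) * (n + 1 - s) ≤ (n + 1) * (n + 1 + 1 + s) := by nlinarith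
    nlinarith

lemma Ksh_zero (h s : ℝ) : Ksh h s 0 = 0 := by simp [Ksh]

lemma Ksh_of_abs (h s : ℝ) (m : ℤ) (n : ℕ) (hm : |(m : ℝ)| = n + 1) :
    Ksh h s m = auxC h s * auxG s n := by
  have : m ≠ 0 := by
    rintro rfl
    simp at hm
    have hn : (0 : ℝ) ≤ n := n.cast_nonneg
    linarith
  unfold Ksh auxC auxG
  rw [if_neg this, hm, show (n : ℝ) + 1 + 1 + s = n + 2 + s by ring]
  ring

lemma exists_abs (m : ℤ) (hm : m ≠ 0) : ∃ n : ℕ, |(m : ℝ)| = n + 1 := by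
  refine ⟨m.natAbs - 1, ?_⟩
  have : m.natAbs ≠ 0 := by simpa using hm
  have h2 : ((m.natAbs - 1 : ℕ) : ℝ) + 1 = (m.natAbs : ℝ) := by
    have : m.natAbs - 1 + 1 = m.natAbs := by omega
    exact_mod_cast this
  rw [h2, Nat.cast_natAbs]; simp

lemma auxC_pos {h s : ℝ} (hh : 0 < h) (h0 : 0 < s) (h1 : s < 1) : 0 < auxC h s := by
  have := Real.Gamma_pos_of_pos (show 0 < 1/2 + s by linarith)
  have := Real.Gamma_pos_of_pos (show 0 < 1 - s by linarith)
  have := Real.pi_pos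
  unfold auxC
  positivity

lemma hasSum_Ksh {h s : ℝ} (h0 : 0 < s) (h1 : s < 1) :
    HasSum (Ksh h s) (auxC h s * (auxA s 0 / s)) := by
  have hG := (hasSum_auxG h0 h1).mul_left (auxC h s)
  have := HasSum.of_add_one_of_neg_add_one (f := Ksh h s)
    (m := auxC h s * (auxA s 0 / (2 * s))) (m' := auxC h s * (auxA s 0 / (2 * s))) ?_ ?_
  · convert this using 1
    rw [Ksh_zero]; field_simp; ring
  · refine hasSum_of_eq hG ?_
    intro n
    rw [Ksh_of_abs h s _ n]
    push_cast
    exact abs_of_pos (by positivity)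
  · refine hasSum_of_eq hG ?_
    intro n
    rw [Ksh_of_abs h s _ n]
    push_cast
    rw [abs_neg]
    exact abs_of_pos (by positivity)

lemma Ksh_nonneg {h s : ℝ} (hh : 0 < h) (h0 : 0 < s) (h1 : s < 1) (m : ℤ) : 0 ≤ Ksh h s m := by
  by_cases hm : m = 0
  · rw [hm, Ksh_zero]
  · obtain ⟨n, hn⟩ := exists_abs m hm
    rw [Ksh_of_abs h s m n hn]
    exact (mul_pos (auxC_pos hh h0 h1) (auxG_pos h0 h1 n)).le

lemma Ksh_bound {h s : ℝ} (hh : 0 < h) (h0 : 0 < s) (h1 : s < 1) (j m : ℤ) :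
    Ksh h s (j - m) ≤ auxC h s * auxG s 0 * (2 + |(j : ℝ)|) * (1 / (1 + |(m : ℝ)|)) := by
  have hC := auxC_pos hh h0 h1
  have hG0 := auxG_pos h0 h1 0
  by_cases hm : j - m = 0
  · rw [hm, Ksh_zero]; positivity
  · obtain ⟨n, hn⟩ := exists_abs _ hm
    rw [Ksh_of_abs h s _ n hn]
    have hn0 : (0 : ℝ) ≤ n := n.cast_nonneg
    have hG := auxG_pos h0 h1 n
    have hle := auxG_le h0 h1 n
    push_cast at hn
    have ht : |(m : ℝ)| ≤ |(j : ℝ)| + (n + 1) := by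
      have := abs_sub (j : ℝ) (j - m)
      rw [hn] at this
      simpa using this
    have key : auxG s n * (1 + |(m : ℝ)|) ≤ auxG s 0 * (2 + |(j : ℝ)|) := by
      have h3 : 1 + |(m : ℝ)| ≤ (n + 1) * (2 + |(j : ℝ)|) := by
        nlinarith [abs_nonneg (j : ℝ), mul_nonneg hn0 (abs_nonneg (j : ℝ))]
      calc _ ≤ auxG s n * ((n + 1) * (2 + |(j : ℝ)|)) := by gcongr
        _ = ((n + 1) * auxG s n) * (2 + |(j : ℝ)|) := by ring
        _ ≤ _ := by gcongr
    rw [mul_one_div, le_div_iff₀ (by positivity)]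
    nlinarith

lemma ftail {h s : ℝ} (hh : 0 < h) (h0 : 0 < s) (h1 : s < 1) (u : ℤ → ℝ) (j m : ℤ) :
    ‖u m * Ksh h s (j - m)‖ ≤
      auxC h s * auxG s 0 * (2 + |(j : ℝ)|) * (|u m| / (1 + |(m : ℝ)|)) := by
  rw [norm_mul, Real.norm_eq_abs, Real.norm_eq_abs, abs_of_nonneg (Ksh_nonneg hh h0 h1 _)]
  refine (mul_le_mul_of_nonneg_left (Ksh_bound hh h0 h1 j m) (abs_nonneg _)).trans_eq ?_
  ring

lemma auxC_mul {h s : ℝ} (h0 : 0 < s) (h1 : s < 1) : auxC h s * (auxA s 0 / s) =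
    (4 : ℝ) ^ s * Real.Gamma (1/2 + s) / (Real.sqrt Real.pi * Real.Gamma (1 + s)) / h ^ (2 * s) := by
  have := Real.Gamma_pos_of_pos (show 0 < 1 - s by linarith)
  have := Real.Gamma_pos_of_pos (show 0 < 1 + s by linarith)
  have := Real.pi_pos
  unfold auxC auxA
  simp only [Nat.cast_zero, zero_add]
  field_simp

lemma Gamma_cont {f : ℝ → ℝ} (hf : Continuous f) (h0 : 0 < f 0) :
    Filter.Tendsto (fun s => Real.Gamma (f s)) (nhdsWithin 0 (Set.Ioi 0))
      (nhds (Real.Gamma (f 0))) := by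
  have h1 : ContinuousAt Real.Gamma (f 0) :=
    (Real.differentiableAt_Gamma fun m => by
      have : (0 : ℝ) ≤ m := m.cast_nonneg
      linarith).continuousAt
  exact (h1.comp hf.continuousAt).tendsto.mono_left nhdsWithin_le_nhds

lemma tendsto_total {h : ℝ} (hh : 0 < h) :
    Filter.Tendsto (fun s => (4 : ℝ) ^ s * Real.Gamma (1/2 + s) /
      (Real.sqrt Real.pi * Real.Gamma (1 + s)) / h ^ (2 * s))
      (nhdsWithin 0 (Set.Ioi 0)) (nhds 1) := by
  have e4 : Filter.Tendsto (fun s : ℝ => (4 : ℝ) ^ s) (nhdsWithin 0 (Set.Ioi 0)) (nhds 1) := by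
    have : Continuous fun s : ℝ => (4 : ℝ) ^ s := Real.continuous_const_rpow (by norm_num)
    simpa using (this.tendsto 0).mono_left nhdsWithin_le_nhds
  have eh : Filter.Tendsto (fun s : ℝ => h ^ (2 * s)) (nhdsWithin 0 (Set.Ioi 0)) (nhds 1) := by
    have : Continuous fun s : ℝ => h ^ (2 * s) :=
      (Real.continuous_const_rpow hh.ne').comp (continuous_const.mul continuous_id)
    simpa using (this.tendsto 0).mono_left nhdsWithin_le_nhds
  have g1 := Gamma_cont (f := fun s => 1/2 + s) (by fun_prop) (by norm_num)
  have g2 := Gamma_cont (f := fun s => 1 + s) (by fun_prop) (by norm_num)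
  simp only [add_zero, Real.Gamma_one_half_eq, Real.Gamma_one] at g1 g2
  have hp : Real.sqrt Real.pi ≠ 0 := (Real.sqrt_pos.2 Real.pi_pos).ne'
  have := ((e4.mul g1).div (g2.const_mul (Real.sqrt Real.pi)) (by simpa using hp)).div eh one_ne_zero
  simp only [mul_one, one_mul, div_one, div_self hp] at this
  exact this

lemma tendsto_coef {h : ℝ} (hh : 0 < h) :
    Filter.Tendsto (fun s => auxC h s * auxG s 0) (nhdsWithin 0 (Set.Ioi 0)) (nhds 0) := by
  have e1 : Filter.Tendsto (fun s : ℝ => s / (1 + s)) (nhdsWithin 0 (Set.Ioi 0)) (nhds 0) := by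
    have : ContinuousAt (fun s : ℝ => s / (1 + s)) 0 := by
      apply ContinuousAt.div <;> first | fun_prop | norm_num
    simpa using this.tendsto.mono_left nhdsWithin_le_nhds
  have := (tendsto_total hh).mul e1
  rw [mul_zero] at this
  refine this.congr' ?_
  filter_upwards [Ioo_mem_nhdsGT (show (0 : ℝ) < 1 by norm_num)] with s hs
  rw [← auxC_mul hs.1 hs.2, auxG_eq hs.1]
  have := hs.1
  simp only [Nat.cast_zero, zero_add]
  field_simp

theorem fracLap_tendsto_id_of_s_to_zero (h : ℝ) (hh : 0 < h) (u : ℤ → ℝ)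
    (hu : Summable fun m : ℤ => |u m| / (1 + |(m : ℝ)|)) (j : ℤ) :
    (∀ s : ℝ, 0 < s → s < 1 →
      Summable fun m : ℤ => |(u j - u m) * Ksh h s (j - m)|) ∧
    Filter.Tendsto (fun s : ℝ => fracLap h s u j)
      (nhdsWithin 0 (Set.Ioi 0)) (nhds (u j)) := by
  have hK : ∀ s : ℝ, 0 < s → s < 1 →
      HasSum (fun m : ℤ => u j * Ksh h s (j - m)) (u j * (auxC h s * (auxA s 0 / s))) := by
    intro s h0 h1
    exact ((Equiv.subLeft j).hasSum_iff.2 (hasSum_Ksh h0 h1)).mul_left (u j)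
  have hT : ∀ s : ℝ, 0 < s → s < 1 → Summable (fun m : ℤ => u m * Ksh h s (j - m)) := by
    intro s h0 h1
    exact Summable.of_norm_bounded (hu.mul_left _) (ftail hh h0 h1 u j)
  refine ⟨fun s h0 h1 => ?_, ?_⟩
  · have := ((hK s h0 h1).summable.sub (hT s h0 h1)).abs
    simpa only [sub_mul] using this
  · have hE : Filter.Tendsto (fun s => ∑' m : ℤ, u m * Ksh h s (j - m))
        (nhdsWithin 0 (Set.Ioi 0)) (nhds 0) := by
      have hb := ((tendsto_coef hh).mul_const (2 + |(j : ℝ)|)).mul_const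
        (∑' m : ℤ, |u m| / (1 + |(m : ℝ)|))
      rw [zero_mul, zero_mul] at hb
      refine squeeze_zero_norm' ?_ hb
      filter_upwards [Ioo_mem_nhdsGT (show (0 : ℝ) < 1 by norm_num)] with s hs
      rw [← tsum_mul_left]
      exact tsum_of_norm_bounded (hu.mul_left _).hasSum (ftail hh hs.1 hs.2 u j)
    have := ((tendsto_total hh).const_mul (u j)).sub hE
    rw [mul_one, sub_zero] at this
    refine this.congr' ?_
    filter_upwards [Ioo_mem_nhdsGT (show (0 : ℝ) < 1 by norm_num)] with s hs
    unfold fracLap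
    simp only [sub_mul]
    rw [(hK s hs.1 hs.2).summable.tsum_sub (hT s hs.1 hs.2), (hK s hs.1 hs.2).tsum_eq,
      auxC_mul hs.1 hs.2]
end

section
/- (Discrete Hardy–Littlewood–Sobolev inequality.) Let h>0, 0<s<1/2, and 1<p<q<∞ with 1/q ≤ 1/p − 2s. There exists a constant C>0, depending only on p, q and s (in particular independent of h), such that for every f:ℤ→ℝ with ‖f‖_{ℓ_h^p}<∞, the function (-Δ_h)^{-s}f_j = Σ_{m∈ℤ} K_{-s}^h(j−m)·f_m is well defined (the series converges absolutely for each j) and ‖(-Δ_h)^{-s}f‖_{ℓ_h^q} ≤ (C/h^{1/p−2s−1/q})·‖f‖_{ℓ_h^p}. -/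
/-- The kernel of the fractional discrete integral (negative power) on the mesh of size `h`. -/
noncomputable def Knsh (h s : ℝ) (m : ℤ) : ℝ :=
  ((4 : ℝ) ^ (-s) * Real.Gamma (1/2 - s) / (Real.sqrt Real.pi * Real.Gamma s)) *
    (h ^ (2 * s) * Real.Gamma (|(m : ℝ)| + s) / Real.Gamma (|(m : ℝ)| + 1 - s))

/-- The fractional discrete integral `(-Δ_h)^{-s} f_j = Σ_{m ∈ ℤ} K_{-s}^h(j-m) f_m`. -/
noncomputable def fracInt (h s : ℝ) (f : ℤ → ℝ) (j : ℤ) : ℝ :=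
  ∑' m : ℤ, Knsh h s (j - m) * f m
open scoped ENNReal

lemma geo_fin {a : ℝ} (ha : 0 < a) : ∑' n : ℕ, ((2:ℝ≥0∞) ^ (-a)) ^ n < ∞ := by
  rw [ENNReal.tsum_geometric]
  have : (2:ℝ≥0∞) ^ (-a) < 1 := ENNReal.rpow_lt_one_of_one_lt_of_neg (by norm_num) (by linarith)
  rw [ENNReal.inv_lt_top]
  exact tsub_pos_of_lt this

lemma two_pow_rpow (a : ℝ) (n : ℕ) : ((2:ℝ≥0∞) ^ a) ^ n = 2 ^ ((n:ℝ) * a) := by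
  rw [← ENNReal.rpow_natCast, ← ENNReal.rpow_mul, mul_comm]

lemma two_add (a b : ℝ) : (2:ℝ≥0∞) ^ a * 2 ^ b = 2 ^ (a + b) :=
  (ENNReal.rpow_add _ _ (by norm_num) (by norm_num)).symm

lemma two_ne_top (a : ℝ) : (2:ℝ≥0∞) ^ a ≠ ∞ :=
  ENNReal.rpow_ne_top_of_ne_zero (by norm_num) (by norm_num)

lemma two_rpow_ne_zero (a : ℝ) : (2:ℝ≥0∞) ^ a ≠ 0 := by
  intro h
  rw [ENNReal.rpow_eq_zero_iff] at h
  simp at h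

lemma geo_int {a b : ℝ} (ha : 0 < a) (hb : 0 < b) :
    ∑' i : ℤ, min ((2:ℝ≥0∞) ^ (((i:ℝ) + 1) * a)) (2 ^ (-(i:ℝ) * b)) < ∞ := by
  rw [← Equiv.intEquivNatSumNat.symm.tsum_eq, ENNReal.summable.tsum_sum ENNReal.summable]
  refine ENNReal.add_lt_top.2 ⟨?_, ?_⟩
  · refine lt_of_le_of_lt (ENNReal.tsum_le_tsum fun n => ?_) (geo_fin hb)
    refine (min_le_right _ _).trans (le_of_eq ?_)
    rw [two_pow_rpow]
    simp [Equiv.intEquivNatSumNat]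
  · refine lt_of_le_of_lt (ENNReal.tsum_le_tsum fun n => ?_) (geo_fin ha)
    refine (min_le_left _ _).trans (le_of_eq ?_)
    rw [two_pow_rpow]
    simp [Equiv.intEquivNatSumNat]

lemma lemG {a b : ℝ} (ha : 0 < a) (hb : 0 < b) : ∃ C : ℝ≥0∞, C < ∞ ∧ ∀ x : ℝ≥0∞, x ≠ 0 → x ≠ ∞ →
    ∑' k : ℕ, min (((2:ℝ≥0∞) ^ (k:ℝ) * x) ^ a) ((2 ^ (k:ℝ) * x) ^ (-b)) ≤ C := by
  refine ⟨_, geo_int ha hb, fun x hx0 hxt => ?_⟩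
  obtain ⟨n, hn1, hn2⟩ := ENNReal.exists_mem_Ico_zpow hx0 hxt (y := 2) (by norm_num) (by norm_num)
  rw [← ENNReal.rpow_intCast] at hn1 hn2
  refine le_trans (ENNReal.tsum_le_tsum fun k => ?_)
    (ENNReal.tsum_comp_le_tsum_of_injective (f := fun k : ℕ => (k:ℤ) + n) ?_ _)
  · refine min_le_min ?_ ?_
    · rw [ENNReal.rpow_mul]
      refine ENNReal.rpow_le_rpow ?_ ha.le
      refine (mul_le_mul_right hn2.le _).trans (le_of_eq ?_)
      rw [two_add]; push_cast; ring_nf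
    · rw [neg_mul_comm, ENNReal.rpow_mul, ENNReal.rpow_neg, ENNReal.rpow_neg, ENNReal.inv_le_inv]
      refine ENNReal.rpow_le_rpow ?_ hb.le
      refine le_trans (le_of_eq ?_) (mul_le_mul_right hn1 _)
      rw [two_add]; push_cast; ring_nf
  · intro a b h; simpa using h

lemma gamma_bound {s : ℝ} (hs0 : 0 < s) (hs1 : s < 1/2) (n : ℕ) :
    Real.Gamma (n + s) / Real.Gamma (n + 1 - s) ≤ 1 / s * ((n:ℝ) + 1) ^ (2 * s - 1) := by
  have hn : (0:ℝ) ≤ n := n.cast_nonneg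
  have hx : 0 < (n:ℝ) + s := by linarith
  have hy : 0 < (n:ℝ) + 1 - s := by linarith
  have hGx := Real.Gamma_pos_of_pos hx
  have hGy := Real.Gamma_pos_of_pos hy
  have h1 := Real.Gamma_mul_add_mul_le_rpow_Gamma_mul_rpow_Gamma hy (by linarith : 0 < (n:ℝ) + 1 - s + 1)
    (by linarith : 0 < 1 - 2 * s) (by linarith : 0 < 2 * s) (by ring)
  rw [show (1 - 2 * s) * ((n:ℝ) + 1 - s) + 2 * s * (n + 1 - s + 1) = (n + s) + 1 by ring,
    Real.Gamma_add_one hx.ne', Real.Gamma_add_one hy.ne', Real.mul_rpow hy.le hGy.le] at h1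
  have h2 : Real.Gamma ((n:ℝ) + 1 - s) ^ (1 - 2 * s) * ((n + 1 - s) ^ (2 * s) * Real.Gamma (n + 1 - s) ^ (2 * s))
      = (n + 1 - s) ^ (2 * s) * Real.Gamma (n + 1 - s) := by
    rw [mul_left_comm, ← Real.rpow_add hGy]; simp
  rw [h2] at h1
  have h3 : ((n:ℝ) + 1 - s) ^ (2 * s) ≤ (n + 1) ^ (2 * s) :=
    Real.rpow_le_rpow hy.le (by linarith) (by linarith)
  rw [div_le_iff₀ hGy, Real.rpow_sub_one (by positivity)]
  have h4 : s * ((n:ℝ) + 1) ≤ n + s := by nlinarith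
  have h5 : s * ((n:ℝ) + 1) * Real.Gamma (n + s) ≤ (n + 1) ^ (2 * s) * Real.Gamma (n + 1 - s) :=
    (mul_le_mul_of_nonneg_right h4 hGx.le).trans (h1.trans (mul_le_mul_of_nonneg_right h3 hGy.le))
  have h6 : 0 < s * ((n:ℝ) + 1) := by positivity
  calc Real.Gamma (n + s) ≤ ((n + 1) ^ (2 * s) * Real.Gamma (n + 1 - s)) / (s * ((n:ℝ) + 1)) := by
        rw [le_div_iff₀ h6]; linarith
    _ = _ := by field_simp

noncomputable def chi (k : ℕ) (n : ℤ) : ℝ≥0∞ := if n.natAbs < 2 ^ k then 1 else 0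

lemma chi_sum (k : ℕ) : ∑' n : ℤ, chi k n ≤ 2 * 2 ^ (k:ℝ) := by
  rw [tsum_eq_sum (s := Finset.Ioo (-(2:ℤ)^k) (2^k))]
  · refine (Finset.sum_le_sum (g := fun _ => 1) fun i _ => ?_).trans ?_
    · unfold chi; split_ifs <;> simp
    · simp only [Finset.sum_const, Int.card_Ioo, nsmul_eq_mul, mul_one, ENNReal.rpow_natCast]
      have : ((2:ℤ)^k - -2^k - 1).toNat ≤ 2 * 2^k := by
        have : (0:ℤ) < 2^k := by positivity
        zify
        rw [Int.toNat_of_nonneg] <;> linarith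
      exact_mod_cast this
  · intro n hn
    unfold chi
    rw [if_neg]
    intro h
    apply hn
    rw [Finset.mem_Ioo]
    zify at h
    exact abs_lt.1 h

lemma chi_sum_l (k : ℕ) (m : ℤ) : ∑' j : ℤ, chi k (j - m) ≤ 2 * 2 ^ (k:ℝ) := by
  refine le_trans (le_of_eq ?_) (chi_sum k)
  exact (Equiv.subRight m).tsum_eq (chi k)

lemma chi_sum_r (k : ℕ) (j : ℤ) : ∑' m : ℤ, chi k (j - m) ≤ 2 * 2 ^ (k:ℝ) := by
  refine le_trans (le_of_eq ?_) (chi_sum k)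
  exact (Equiv.subLeft j).tsum_eq (chi k)

lemma chi_rpow (k : ℕ) (n : ℤ) {r : ℝ} (hr : 0 < r) : chi k n ^ r = chi k n := by
  unfold chi; split_ifs <;> simp [hr]

noncomputable def SS (f : ℤ → ℝ≥0∞) (k : ℕ) (j : ℤ) : ℝ≥0∞ := ∑' m, chi k (j - m) * f m

lemma jensen (f : ℤ → ℝ≥0∞) (k : ℕ) (j : ℤ) {r : ℝ} (hr : 1 < r) :
    SS f k j ^ r ≤ (2 * 2 ^ (k:ℝ)) ^ (r - 1) * SS (fun m => f m ^ r) k j := by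
  have hc : r.HolderConjugate (Real.conjExponent r) := Real.HolderConjugate.conjExponent hr
  have h := ENNReal.lintegral_mul_le_Lp_mul_Lq (MeasureTheory.Measure.count (α := ℤ)) hc
    (f := fun m => chi k (j - m) * f m) (g := fun m => chi k (j - m))
    (measurable_of_countable _).aemeasurable (measurable_of_countable _).aemeasurable
  simp only [MeasureTheory.lintegral_count, Pi.mul_apply] at h
  have h0 : 0 < r := by linarith
  have e1 : ∀ m, chi k (j - m) * f m * chi k (j - m) = chi k (j - m) * f m := by
    intro m; unfold chi; split_ifs <;> simp
  simp only [e1, chi_rpow k _ hc.symm.pos, ENNReal.mul_rpow_of_nonneg _ _ h0.le, chi_rpow k _ h0] at h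
  have h2 := ENNReal.rpow_le_rpow (h.trans (mul_le_mul_right
    (ENNReal.rpow_le_rpow (chi_sum_r k j) (by have := hc.symm.pos; positivity)) _)) h0.le
  rw [ENNReal.mul_rpow_of_nonneg _ _ h0.le, ← ENNReal.rpow_mul, ← ENNReal.rpow_mul] at h2
  have e2 : 1 / Real.conjExponent r * r = r - 1 := by
    unfold Real.conjExponent; field_simp
  rw [e2, one_div_mul_cancel h0.ne', ENNReal.rpow_one, mul_comm] at h2
  exact h2

lemma SS_sum (f : ℤ → ℝ≥0∞) (k : ℕ) : ∑' j, SS f k j ≤ 2 * 2 ^ (k:ℝ) * ∑' m, f m := by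
  unfold SS
  rw [ENNReal.tsum_comm, ← ENNReal.tsum_mul_left]
  refine ENNReal.tsum_le_tsum fun m => ?_
  rw [ENNReal.tsum_mul_right]
  exact mul_le_mul_left (chi_sum_l k m) _

lemma SS_le (f : ℤ → ℝ≥0∞) (k : ℕ) (j : ℤ) : SS f k j ≤ ∑' m, f m := by
  refine ENNReal.tsum_le_tsum fun m => ?_
  unfold chi; split_ifs <;> simp

lemma phi_lo {y : ℝ≥0∞} (hy : y ≤ 1) {a b : ℝ} (ha : 0 < a) (hb : 0 < b) :
    min (y ^ a) (y ^ (-b)) = y ^ a :=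
  min_eq_left (ENNReal.rpow_le_rpow_of_exponent_ge hy (by linarith))

lemma phi_hi {y : ℝ≥0∞} (hy : 1 ≤ y) {a b : ℝ} (ha : 0 < a) (hb : 0 < b) :
    min (y ^ a) (y ^ (-b)) = y ^ (-b) :=
  min_eq_right (ENNReal.rpow_le_rpow_of_exponent_le hy (by linarith))

lemma scale {p r : ℝ} (hp : 1 < p) (hpr : p < r) (f : ℤ → ℝ≥0∞) (hf : ∑' m, f m ^ p ≤ 1) (k : ℕ) :
    (2:ℝ≥0∞) ^ ((k:ℝ) * (-(r - r / p + 1))) * ∑' j, SS f k j ^ r ≤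
      2 ^ (r - 1) * (2 ^ r + 2 ^ r) * ∑' m, f m ^ p *
        min ((2 ^ (k:ℝ) * f m ^ p) ^ (r / p - 1)) ((2 ^ (k:ℝ) * f m ^ p) ^ (-(1 - 1 / p))) := by
  classical
  have hp0 : 0 < p := by linarith
  have hr1 : 1 < r := by linarith
  have hr0 : 0 < r := by linarith
  have ha : 0 < r / p - 1 := by rw [sub_pos, one_lt_div hp0]; exact hpr
  have hb : 0 < 1 - 1 / p := by rw [sub_pos, div_lt_one hp0]; exact hp
  have hfle : ∀ m, f m ^ p ≤ 1 := fun m => (ENNReal.le_tsum m).trans hf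
  have hft : ∀ m, f m ≠ ∞ := by
    intro m h
    have := hfle m
    rw [h, ENNReal.top_rpow_of_pos hp0] at this
    simp at this
  set A := ∑' m, f m ^ p *
        min ((2 ^ (k:ℝ) * f m ^ p) ^ (r / p - 1)) ((2 ^ (k:ℝ) * f m ^ p) ^ (-(1 - 1 / p))) with hA
  set P : ℤ → Prop := fun m => 2 ^ (k:ℝ) * f m ^ p ≤ 1 with hP
  set lo : ℤ → ℝ≥0∞ := fun m => if P m then f m else 0 with hlo
  set hi : ℤ → ℝ≥0∞ := fun m => if P m then 0 else f m with hhi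
  have hsplit : ∀ j, SS f k j = SS lo k j + SS hi k j := by
    intro j
    unfold SS
    rw [← ENNReal.tsum_add]
    congr 1; ext m
    by_cases h : P m <;> simp [hlo, hhi, h]
  have key_hi : ∀ m, f m = 2 ^ ((k:ℝ) * (1 - 1 / p)) * (f m ^ p * (2 ^ (k:ℝ) * f m ^ p) ^ (-(1 - 1 / p))) ∨ f m = 0 := by
    intro m
    by_cases h : f m = 0
    · right; exact h
    left
    have h0 : f m ^ p ≠ 0 := by simp [ENNReal.rpow_eq_zero_iff, h, hft m]
    rw [ENNReal.mul_rpow_of_ne_top (two_ne_top _) (ENNReal.rpow_ne_top_of_nonneg hp0.le (hft m)),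
      ← ENNReal.rpow_mul, ← ENNReal.rpow_mul, mul_left_comm (f m ^ p), ← mul_assoc, two_add,
      ← ENNReal.rpow_add _ _ h (hft m)]
    rw [show p + p * -(1 - 1 / p) = 1 by field_simp; ring]
    rw [show (k:ℝ) * (1 - 1 / p) + k * -(1 - 1 / p) = 0 by ring]
    simp
  have Hterm : ∀ m, hi m ≤ 2 ^ ((k:ℝ) * (1 - 1 / p)) * (f m ^ p *
        min ((2 ^ (k:ℝ) * f m ^ p) ^ (r / p - 1)) ((2 ^ (k:ℝ) * f m ^ p) ^ (-(1 - 1 / p)))) := by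
    intro m
    by_cases h : P m
    · simp [hhi, h]
    · have h' : 1 ≤ 2 ^ (k:ℝ) * f m ^ p := (not_le.1 h).le
      simp only [hhi, h, if_false]
      rw [phi_hi h' ha hb]
      rcases key_hi m with h1 | h1
      · exact h1.le
      · rw [h1]; exact zero_le
  have Htot1 : ∑' m, hi m ≤ 2 ^ ((k:ℝ) * (1 - 1 / p)) * A := by
    rw [hA, ← ENNReal.tsum_mul_left]
    exact ENNReal.tsum_le_tsum Hterm
  have hAle : ∑' m, hi m ≤ 2 ^ ((k:ℝ) * (1 - 1 / p)) := by
    calc ∑' m, hi m ≤ ∑' m, 2 ^ ((k:ℝ) * (1 - 1 / p)) * f m ^ p := by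
          refine ENNReal.tsum_le_tsum fun m => ?_
          refine (Hterm m).trans (mul_le_mul_right ?_ _)
          refine mul_le_of_le_one_right' ?_
          rcases le_total (2 ^ (k:ℝ) * f m ^ p) 1 with h | h
          · exact (min_le_left _ _).trans (ENNReal.rpow_le_one h ha.le)
          · exact (min_le_right _ _).trans (ENNReal.rpow_le_one_of_one_le_of_neg h (by linarith))
      _ ≤ _ := by
          rw [ENNReal.tsum_mul_left]
          exact mul_le_of_le_one_right' hf
  have Hb : (2:ℝ≥0∞) ^ ((k:ℝ) * (-(r - r / p + 1))) * ∑' j, SS hi k j ^ r ≤ 2 ^ r * A := by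
    have h1 : ∑' j, SS hi k j ^ r ≤ (2 ^ ((k:ℝ) * (1 - 1 / p))) ^ (r - 1) * (2 * 2 ^ (k:ℝ) * ∑' m, hi m) := by
      refine le_trans ?_ (mul_le_mul_right (SS_sum hi k) _)
      rw [← ENNReal.tsum_mul_left]
      refine ENNReal.tsum_le_tsum fun j => ?_
      have : SS hi k j ^ r = SS hi k j ^ (r - 1) * SS hi k j := by
        conv_rhs => rw [← ENNReal.rpow_one (SS hi k j), ← ENNReal.rpow_mul, 
          ← ENNReal.rpow_add_of_nonneg _ _ (by linarith) (by norm_num)]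
        congr 1; ring
      rw [this]
      exact mul_le_mul_left (ENNReal.rpow_le_rpow ((SS_le hi k j).trans hAle) (by linarith)) _
    calc _ ≤ (2:ℝ≥0∞) ^ ((k:ℝ) * (-(r - r / p + 1))) * ((2 ^ ((k:ℝ) * (1 - 1 / p))) ^ (r - 1) * (2 * 2 ^ (k:ℝ) * (2 ^ ((k:ℝ) * (1 - 1 / p)) * A))) :=
          mul_le_mul_right (h1.trans (mul_le_mul_right (mul_le_mul_right Htot1 _) _)) _
      _ = 2 ^ ((k:ℝ) * (-(r - r / p + 1)) + k * (1 - 1/p) * (r - 1) + 1 + k + k * (1 - 1/p)) * A := by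
          rw [← two_add, ← two_add, ← two_add, ← two_add, ENNReal.rpow_mul 2 (k * (1 - 1/p)), ENNReal.rpow_one]
          ring
      _ = 2 ^ (1:ℝ) * A := by
          congr 2; field_simp; ring
      _ ≤ 2 ^ r * A := mul_le_mul_left (ENNReal.rpow_le_rpow_of_exponent_le (by norm_num) hr1.le) _
  have Lb : (2:ℝ≥0∞) ^ ((k:ℝ) * (-(r - r / p + 1))) * ∑' j, SS lo k j ^ r ≤ 2 ^ r * A := by
    have h1 : ∑' j, SS lo k j ^ r ≤ (2 * 2 ^ (k:ℝ)) ^ (r - 1) * (2 * 2 ^ (k:ℝ) * ∑' m, lo m ^ r) := by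
      refine le_trans ?_ (mul_le_mul_right (SS_sum _ k) _)
      rw [← ENNReal.tsum_mul_left]
      exact ENNReal.tsum_le_tsum fun j => jensen lo k j hr1
    have h2 : 2 ^ ((k:ℝ) * (r / p - 1)) * ∑' m, lo m ^ r ≤ A := by
      rw [← ENNReal.tsum_mul_left]
      refine ENNReal.tsum_le_tsum fun m => ?_
      by_cases h : P m
      · simp only [hlo, h, if_true]
        rw [phi_lo h ha hb, ENNReal.mul_rpow_of_nonneg _ _ ha.le, ← ENNReal.rpow_mul, ← ENNReal.rpow_mul,
          mul_left_comm, ← ENNReal.rpow_add_of_nonneg _ _ hp0.le (by positivity)]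
        apply le_of_eq
        congr 2; field_simp; ring
      · simp [hlo, h, hr0]
    calc _ ≤ _ := mul_le_mul_right h1 _
      _ = 2 ^ ((k:ℝ) * (-(r - r / p + 1)) + (1 + k) * (r - 1) + (1 + k)) * ∑' m, lo m ^ r := by
          have : (2:ℝ≥0∞) * 2 ^ (k:ℝ) = 2 ^ (1 + (k:ℝ)) := by rw [← two_add, ENNReal.rpow_one]
          rw [← two_add, ← two_add, this, ENNReal.rpow_mul 2 (1 + (k:ℝ))]
          ring
      _ = 2 ^ r * (2 ^ ((k:ℝ) * (r / p - 1)) * ∑' m, lo m ^ r) := by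
          rw [← mul_assoc, two_add]
          congr 2; ring
      _ ≤ _ := mul_le_mul_right h2 _
  calc _ ≤ (2:ℝ≥0∞) ^ ((k:ℝ) * (-(r - r / p + 1))) * ∑' j, 2 ^ (r - 1) * (SS lo k j ^ r + SS hi k j ^ r) := by
        refine mul_le_mul_right (ENNReal.tsum_le_tsum fun j => ?_) _
        rw [hsplit]
        exact ENNReal.rpow_add_le_mul_rpow_add_rpow _ _ hr1.le
    _ = 2 ^ (r - 1) * ((2:ℝ≥0∞) ^ ((k:ℝ) * (-(r - r / p + 1))) * ∑' j, SS lo k j ^ r + 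
          (2:ℝ≥0∞) ^ ((k:ℝ) * (-(r - r / p + 1))) * ∑' j, SS hi k j ^ r) := by
        rw [ENNReal.tsum_mul_left, ENNReal.tsum_add]; ring
    _ ≤ 2 ^ (r - 1) * (2 ^ r * A + 2 ^ r * A) := mul_le_mul_right (add_le_add Lb Hb) _
    _ = _ := by ring

lemma besov {p r : ℝ} (hp : 1 < p) (hpr : p < r) : ∃ C : ℝ≥0∞, C < ∞ ∧ ∀ f : ℤ → ℝ≥0∞,
    ∑' m, f m ^ p ≤ 1 → 
    ∑' j, ∑' k : ℕ, (2:ℝ≥0∞) ^ ((k:ℝ) * (-(r - r / p + 1))) * SS f k j ^ r ≤ C := by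
  have hp0 : 0 < p := by linarith
  have ha : 0 < r / p - 1 := by rw [sub_pos, one_lt_div hp0]; exact hpr
  have hb : 0 < 1 - 1 / p := by rw [sub_pos, div_lt_one hp0]; exact hp
  obtain ⟨C, hC, hG⟩ := lemG ha hb
  refine ⟨2 ^ (r - 1) * (2 ^ r + 2 ^ r) * C, ?_, fun f hf => ?_⟩
  · exact ENNReal.mul_lt_top (ENNReal.mul_lt_top (two_ne_top _).lt_top
      (ENNReal.add_lt_top.2 ⟨(two_ne_top _).lt_top, (two_ne_top _).lt_top⟩)) hC
  rw [ENNReal.tsum_comm]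
  simp only [ENNReal.tsum_mul_left]
  refine (ENNReal.tsum_le_tsum fun k => scale hp hpr f hf k).trans ?_
  rw [ENNReal.tsum_mul_left, ENNReal.tsum_comm]
  refine mul_le_mul_right ?_ _
  simp only [ENNReal.tsum_mul_left]
  calc _ ≤ ∑' m, f m ^ p * C := by
        refine ENNReal.tsum_le_tsum fun m => ?_
        by_cases h : f m ^ p = 0
        · simp [h]
        · refine mul_le_mul_right (hG _ h ?_) _
          exact (((ENNReal.le_tsum m).trans hf).trans_lt (by simp)).ne
    _ ≤ C := by
        rw [ENNReal.tsum_mul_right]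
        exact mul_le_of_le_one_left' hf

lemma SS_holder {p : ℝ} (hp : 1 < p) (f : ℤ → ℝ≥0∞) (hf : ∑' m, f m ^ p ≤ 1) (k : ℕ) (j : ℤ) :
    SS f k j ≤ 2 * 2 ^ ((k:ℝ) * (1 - 1 / p)) := by
  have hp0 : 0 < p := by linarith
  have hb : 0 < 1 - 1 / p := by rw [sub_pos, div_lt_one hp0]; exact hp
  have h := (jensen f k j hp).trans (mul_le_of_le_one_right' ((SS_le _ k j).trans hf))
  have h2 := ENNReal.rpow_le_rpow h (by positivity : 0 ≤ 1 / p)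
  rw [← ENNReal.rpow_mul, ← ENNReal.rpow_mul, mul_one_div_cancel hp0.ne', ENNReal.rpow_one,
    show (p - 1) * (1 / p) = 1 - 1 / p by field_simp, ENNReal.mul_rpow_of_nonneg _ _ hb.le, ← ENNReal.rpow_mul] at h2
  refine h2.trans (mul_le_mul_left ?_ _)
  calc (2:ℝ≥0∞) ^ (1 - 1 / p) ≤ 2 ^ (1:ℝ) := ENNReal.rpow_le_rpow_of_exponent_le (by norm_num) 
        (by have : 0 < 1 / p := by positivity
            linarith)
    _ = 2 := by simp

lemma dyad_le {p q : ℝ} (hp : 1 < p) (hpq : p < q) : ∃ C : ℝ≥0∞, C < ∞ ∧ ∀ f : ℤ → ℝ≥0∞,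
    ∑' m, f m ^ p ≤ 1 → 
    ∑' j, (∑' k : ℕ, (2:ℝ≥0∞) ^ ((k:ℝ) * (-(1 - 1 / p + 1 / q))) * SS f k j) ^ q ≤ C := by
  obtain ⟨r, hpr, hrq⟩ := exists_between hpq
  have hp0 : 0 < p := by linarith
  have hr0 : 0 < r := by linarith
  have hq0 : 0 < q := by linarith
  have he : 0 < 1 / r - 1 / q := by
    rw [sub_pos]; exact one_div_lt_one_div_of_lt hr0 hrq
  obtain ⟨C1, hC1, hB⟩ := besov hp hpr
  obtain ⟨C2, hC2, hG⟩ := lemG he (by positivity : 0 < 1 / q)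
  refine ⟨(2 * C2) ^ q * C1, ENNReal.mul_lt_top (ENNReal.rpow_lt_top_of_nonneg hq0.le 
    (ENNReal.mul_lt_top (by norm_num) hC2).ne) hC1, fun f hf => ?_⟩
  refine le_trans ?_ (mul_le_mul_right (hB f hf) _)
  rw [← ENNReal.tsum_mul_left]
  refine ENNReal.tsum_le_tsum fun j => ?_
  set x := ∑' k : ℕ, (2:ℝ≥0∞) ^ ((k:ℝ) * (-(r - r / p + 1))) * SS f k j ^ r with hx
  have hxt : x ≠ ∞ := (((ENNReal.le_tsum j).trans (hB f hf)).trans_lt hC1).ne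
  have h1 : ∀ k : ℕ, (2:ℝ≥0∞) ^ ((k:ℝ) * (-(1 - 1 / p + 1 / r))) * SS f k j ≤ x ^ (1 / r) := by
    intro k
    have : (2:ℝ≥0∞) ^ ((k:ℝ) * (-(r - r / p + 1))) * SS f k j ^ r ≤ x := ENNReal.le_tsum k
    have := ENNReal.rpow_le_rpow this (by positivity : 0 ≤ 1 / r)
    rw [ENNReal.mul_rpow_of_nonneg _ _ (by positivity), ← ENNReal.rpow_mul, ← ENNReal.rpow_mul,
      mul_one_div_cancel hr0.ne', ENNReal.rpow_one] at this
    refine le_trans (le_of_eq ?_) this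
    congr 2; field_simp
  have h2 : ∑' k : ℕ, (2:ℝ≥0∞) ^ ((k:ℝ) * (-(1 - 1 / p + 1 / q))) * SS f k j ≤ 2 * C2 * x ^ (1 / q) := by
    by_cases hx0 : x = 0
    · have : ∀ k, SS f k j = 0 := by
        intro k
        have := h1 k
        rw [hx0, ENNReal.zero_rpow_of_pos (by positivity)] at this
        simpa [two_rpow_ne_zero] using this
      simp [this]
    calc _ ≤ ∑' k : ℕ, (2 * x ^ (1 / q)) * min (((2:ℝ≥0∞) ^ (k:ℝ) * x) ^ (1 / r - 1 / q)) ((2 ^ (k:ℝ) * x) ^ (-(1 / q))) := by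
          refine ENNReal.tsum_le_tsum fun k => ?_
          rcases min_choice (((2:ℝ≥0∞) ^ (k:ℝ) * x) ^ (1 / r - 1 / q)) ((2 ^ (k:ℝ) * x) ^ (-(1 / q))) with h | h
          · rw [h, ENNReal.mul_rpow_of_nonneg _ _ he.le, ← ENNReal.rpow_mul]
            calc _ = 2 ^ ((k:ℝ) * (1 / r - 1 / q)) * ((2:ℝ≥0∞) ^ ((k:ℝ) * (-(1 - 1 / p + 1 / r))) * SS f k j) := by
                  rw [← mul_assoc, two_add]; congr 2; ring
              _ ≤ 2 ^ ((k:ℝ) * (1 / r - 1 / q)) * (2 * x ^ (1 / r)) := 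
                  mul_le_mul_right ((h1 k).trans (le_mul_of_one_le_left' (by norm_num))) _
              _ = 2 * (x ^ (1/q) * x ^ (1/r - 1/q)) * 2 ^ ((k:ℝ) * (1 / r - 1 / q)) := by
                  rw [← ENNReal.rpow_add _ _ hx0 hxt, add_sub_cancel]; ring
              _ = _ := by ring
          · rw [h, ENNReal.mul_rpow_of_ne_top (two_ne_top _) hxt, ← ENNReal.rpow_mul]
            calc _ ≤ (2:ℝ≥0∞) ^ ((k:ℝ) * (-(1 - 1 / p + 1 / q))) * (2 * 2 ^ ((k:ℝ) * (1 - 1 / p))) := 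
                  mul_le_mul_right (SS_holder hp f hf k j) _
              _ = 2 * 2 ^ ((k:ℝ) * (-(1/q))) := by
                  rw [mul_left_comm, two_add]; congr 2; ring
              _ = 2 * (x ^ (1/q) * x ^ (-(1/q))) * 2 ^ ((k:ℝ) * (-(1/q))) := by
                  rw [← ENNReal.rpow_add _ _ hx0 hxt, add_neg_cancel]; simp
              _ = _ := by ring
      _ ≤ 2 * x ^ (1 / q) * C2 := by
          rw [ENNReal.tsum_mul_left]
          exact mul_le_mul_right (hG x hx0 hxt) _
      _ = _ := by ring
  refine (ENNReal.rpow_le_rpow h2 hq0.le).trans (le_of_eq ?_)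
  rw [ENNReal.mul_rpow_of_nonneg _ _ hq0.le, ← ENNReal.rpow_mul, one_div_mul_cancel hq0.ne', ENNReal.rpow_one]

/-- The comparison kernel. -/
noncomputable def ww (l : ℝ) (n : ℤ) : ℝ≥0∞ := ((n.natAbs + 1 : ℕ) : ℝ≥0∞) ^ (-l)

lemma ww_le {l : ℝ} (hl : 0 < l) (n : ℤ) : ww l n ≤ 2 ^ l * ∑' k : ℕ, 2 ^ ((k:ℝ) * (-l)) * chi k n := by
  set k := Nat.size n.natAbs with hk
  have h1 : n.natAbs < 2 ^ k := Nat.lt_size_self _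
  have h2 : 2 ^ k ≤ 2 * (n.natAbs + 1) := by
    rcases Nat.eq_zero_or_pos k with h | h
    · rw [h]; omega
    · obtain ⟨i, hi⟩ := Nat.exists_eq_succ_of_ne_zero h.ne'
      have : 2 ^ i ≤ n.natAbs := Nat.lt_size.1 (by omega)
      rw [hi, pow_succ]; omega
  refine le_trans ?_ (mul_le_mul_right (ENNReal.le_tsum k) _)
  unfold chi ww
  rw [if_pos h1, mul_one, ENNReal.rpow_mul, ENNReal.rpow_neg, ENNReal.rpow_neg, ENNReal.rpow_natCast]
  have h3 : ((2:ℝ≥0∞) ^ k) ≤ 2 * ((n.natAbs + 1 : ℕ) : ℝ≥0∞) := by exact_mod_cast h2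
  have h4 := ENNReal.rpow_le_rpow h3 hl.le
  rw [ENNReal.mul_rpow_of_nonneg _ _ hl.le] at h4
  rw [← div_eq_mul_inv, ENNReal.le_div_iff_mul_le (Or.inr (two_rpow_ne_zero l)) (Or.inr (two_ne_top l)), mul_comm,
    ← div_eq_mul_inv]
  exact ENNReal.div_le_of_le_mul h4

lemma conv_le {p q : ℝ} (hp : 1 < p) (hpq : p < q) : ∃ C : ℝ≥0∞, C < ∞ ∧ ∀ f : ℤ → ℝ≥0∞,
    ∑' m, f m ^ p ≤ 1 → 
    ∑' j, (∑' m, ww (1 - 1 / p + 1 / q) (j - m) * f m) ^ q ≤ C := by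
  have hp0 : 0 < p := by linarith
  have hq0 : 0 < q := by linarith
  have hl : 0 < 1 - 1 / p + 1 / q := by
    have : 0 < 1 - 1 / p := by rw [sub_pos, div_lt_one hp0]; exact hp
    positivity
  obtain ⟨C, hC, H⟩ := dyad_le hp hpq
  refine ⟨(2 ^ (1 - 1 / p + 1 / q)) ^ q * C, ENNReal.mul_lt_top (ENNReal.rpow_lt_top_of_nonneg hq0.le 
    (two_ne_top _)) hC, fun f hf => ?_⟩
  refine le_trans ?_ (mul_le_mul_right (H f hf) _)
  rw [← ENNReal.tsum_mul_left]
  refine ENNReal.tsum_le_tsum fun j => ?_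
  rw [← ENNReal.mul_rpow_of_nonneg _ _ hq0.le]
  refine ENNReal.rpow_le_rpow ?_ hq0.le
  calc _ ≤ ∑' m, 2 ^ (1 - 1 / p + 1 / q) * ∑' k : ℕ, 2 ^ ((k:ℝ) * (-(1 - 1 / p + 1 / q))) * chi k (j - m) * f m := by
        refine ENNReal.tsum_le_tsum fun m => ?_
        rw [ENNReal.tsum_mul_right, ← mul_assoc]
        exact mul_le_mul_left (ww_le hl _) _
    _ = _ := by
        rw [ENNReal.tsum_mul_left, ENNReal.tsum_comm]
        simp only [mul_assoc, ENNReal.tsum_mul_left, SS]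

lemma conv_le' {p q : ℝ} (hp : 1 < p) (hpq : p < q) : ∃ C : ℝ≥0∞, C < ∞ ∧ ∀ f : ℤ → ℝ≥0∞,
    ∑' m, f m ^ p ≠ ∞ → 
    ∑' j, (∑' m, ww (1 - 1 / p + 1 / q) (j - m) * f m) ^ q ≤ C * (∑' m, f m ^ p) ^ (q / p) := by
  have hp0 : 0 < p := by linarith
  have hq0 : 0 < q := by linarith
  obtain ⟨C, hC, H⟩ := conv_le hp hpq
  refine ⟨C, hC, fun f hf => ?_⟩
  set N := ∑' m, f m ^ p with hN
  by_cases h0 : N = 0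
  · have : ∀ m, f m = 0 := by
      intro m
      have := ENNReal.tsum_eq_zero.1 h0 m
      rw [ENNReal.rpow_eq_zero_iff] at this
      rcases this with h | h
      · exact h.1
      · linarith [h.2]
    simp [this, hq0]
  set t := N ^ (1 / p) with ht
  have ht0 : t ≠ 0 := by simp [ht, ENNReal.rpow_eq_zero_iff, h0, hf]
  have htt : t ≠ ∞ := ENNReal.rpow_ne_top_of_nonneg (by positivity) hf
  have e : ∀ m, f m = t * (t⁻¹ * f m) := fun m => by
    rw [← mul_assoc, ENNReal.mul_inv_cancel ht0 htt, one_mul]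
  have h1 := H (fun m => t⁻¹ * f m) (by
    simp only [ENNReal.mul_rpow_of_nonneg _ _ hp0.le]
    rw [ENNReal.tsum_mul_left, ← hN, ENNReal.inv_rpow, ht, ← ENNReal.rpow_mul,
      one_div_mul_cancel hp0.ne', ENNReal.rpow_one, ENNReal.inv_mul_cancel h0 hf])
  calc _ = ∑' j, t ^ q * (∑' m, ww (1 - 1 / p + 1 / q) (j - m) * (t⁻¹ * f m)) ^ q := by
        congr 1; ext j
        rw [← ENNReal.mul_rpow_of_nonneg _ _ hq0.le, ← ENNReal.tsum_mul_left]
        congr 2; ext m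
        conv_lhs => rw [e m]
        ring
    _ ≤ t ^ q * C := by
        rw [ENNReal.tsum_mul_left]; exact mul_le_mul_right h1 _
    _ = _ := by
        rw [ht, ← ENNReal.rpow_mul, mul_comm]; congr 2; ring

lemma Knsh_bound {s l : ℝ} (hs0 : 0 < s) (hs1 : s < 1/2) (hl : 2 * s - 1 ≤ -l) :
    ∃ D : ℝ, 0 < D ∧ ∀ h : ℝ, 0 < h → ∀ n : ℤ,
      |Knsh h s n| ≤ D * h ^ (2 * s) * ((n.natAbs + 1 : ℕ) : ℝ) ^ (-l) := by
  have hG1 : 0 < Real.Gamma (1/2 - s) := Real.Gamma_pos_of_pos (by linarith)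
  have hG2 : 0 < Real.Gamma s := Real.Gamma_pos_of_pos hs0
  have hc : 0 < (4 : ℝ) ^ (-s) * Real.Gamma (1/2 - s) / (Real.sqrt Real.pi * Real.Gamma s) := by
    have := Real.pi_pos
    positivity
  refine ⟨(4 : ℝ) ^ (-s) * Real.Gamma (1/2 - s) / (Real.sqrt Real.pi * Real.Gamma s) * (1 / s),
    by positivity, fun h hh n => ?_⟩
  unfold Knsh
  have hn : |(n:ℝ)| = (n.natAbs : ℝ) := by
    rw [Nat.cast_natAbs]; simp
  rw [hn]
  have hN : (0:ℝ) ≤ (n.natAbs : ℝ) := Nat.cast_nonneg _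
  have g1 : 0 < Real.Gamma ((n.natAbs : ℝ) + s) := Real.Gamma_pos_of_pos (by linarith)
  have g2 : 0 < Real.Gamma ((n.natAbs : ℝ) + 1 - s) := Real.Gamma_pos_of_pos (by linarith)
  rw [abs_of_nonneg (by positivity), mul_div_assoc (h ^ (2 * s)), mul_assoc, mul_assoc]
  refine mul_le_mul_of_nonneg_left ?_ hc.le
  rw [mul_left_comm (1 / s)]
  refine mul_le_mul_of_nonneg_left ?_ (by positivity)
  refine (gamma_bound hs0 hs1 _).trans (mul_le_mul_of_nonneg_left ?_ (by positivity))
  push_cast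
  exact Real.rpow_le_rpow_of_exponent_le (by linarith) hl

/-- Discrete Hardy–Littlewood–Sobolev inequality. -/
theorem discrete_HLS (s p q : ℝ) (hs0 : 0 < s) (hs1 : s < 1/2)
    (hp : 1 < p) (hpq : p < q) (hq : 1/q ≤ 1/p - 2 * s) :
    ∃ C : ℝ, 0 < C ∧ ∀ h : ℝ, 0 < h → ∀ f : ℤ → ℝ,
      (Summable fun j : ℤ => |f j| ^ p) →
      (∀ j : ℤ, Summable fun m : ℤ => |Knsh h s (j - m) * f m|) ∧
      (h * ∑' j : ℤ, |fracInt h s f j| ^ q) ^ (1/q) ≤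
        C / h ^ (1/p - 2 * s - 1/q) * (h * ∑' j : ℤ, |f j| ^ p) ^ (1/p) := by
  have hp0 : 0 < p := by linarith
  have hq0 : 0 < q := by linarith
  obtain ⟨D, hD, hK⟩ := Knsh_bound (l := 1 - 1 / p + 1 / q) hs0 hs1 (by linarith)
  obtain ⟨C0, hC0, hconv⟩ := conv_le' hp hpq
  set B : ℝ := C0.toReal + 1 with hB
  have hBpos : 0 < B := by have : 0 ≤ C0.toReal := ENNReal.toReal_nonneg
                           linarith
  have hC0B : C0 ≤ ENNReal.ofReal B := by
    rw [← ENNReal.ofReal_toReal hC0.ne]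
    exact ENNReal.ofReal_le_ofReal (by linarith)
  refine ⟨D * B ^ (1/q), by positivity, fun h hh f hf => ?_⟩
  set X := ∑' j : ℤ, |f j| ^ p with hX
  have hX0 : 0 ≤ X := tsum_nonneg fun j => by positivity
  set F : ℤ → ℝ≥0∞ := fun m => ENNReal.ofReal |f m| with hF
  have hFX : ∑' m, F m ^ p = ENNReal.ofReal X := by
    rw [hX, ENNReal.ofReal_tsum_of_nonneg (fun j => by positivity) hf]
    congr 1; ext m
    exact ENNReal.ofReal_rpow_of_nonneg (abs_nonneg _) hp0.le
  have hDh : 0 < D * h ^ (2 * s) := by positivity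
  have hterm : ∀ j m, ENNReal.ofReal |Knsh h s (j - m) * f m| ≤
      ENNReal.ofReal (D * h ^ (2 * s)) * (ww (1 - 1 / p + 1 / q) (j - m) * F m) := by
    intro j m
    rw [abs_mul, ENNReal.ofReal_mul (abs_nonneg _), ← mul_assoc]
    refine mul_le_mul_left ?_ _
    refine (ENNReal.ofReal_le_ofReal (hK h hh (j - m))).trans (le_of_eq ?_)
    rw [ENNReal.ofReal_mul hDh.le, ← ENNReal.ofReal_rpow_of_pos (by positivity), ENNReal.ofReal_natCast]
    rfl
  have hT := hconv F (by rw [hFX]; exact ENNReal.ofReal_ne_top)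
  rw [hFX, ENNReal.ofReal_rpow_of_nonneg hX0 (by positivity)] at hT
  have hsum : ∀ j, ∑' m, ENNReal.ofReal |Knsh h s (j - m) * f m| ≤
      ENNReal.ofReal (D * h ^ (2 * s)) * ∑' m, ww (1 - 1 / p + 1 / q) (j - m) * F m := by
    intro j
    rw [← ENNReal.tsum_mul_left]
    exact ENNReal.tsum_le_tsum (hterm j)
  have hfin : ∀ j, ∑' m, ww (1 - 1 / p + 1 / q) (j - m) * F m ≠ ∞ := by
    intro j hj
    have h1 := (ENNReal.le_tsum j).trans hT
    rw [hj, ENNReal.top_rpow_of_pos hq0] at h1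
    exact (ENNReal.mul_lt_top hC0 ENNReal.ofReal_lt_top).ne (top_le_iff.1 h1)
  have hsummable : ∀ j : ℤ, Summable fun m : ℤ => |Knsh h s (j - m) * f m| := by
    intro j
    have h1 : ∑' m, ENNReal.ofReal |Knsh h s (j - m) * f m| ≠ ∞ :=
      ((hsum j).trans_lt (ENNReal.mul_lt_top ENNReal.ofReal_lt_top (hfin j).lt_top)).ne
    have h2 := ENNReal.summable_toReal h1
    simpa using h2
  refine ⟨hsummable, ?_⟩
  have hbound : ∀ j, ENNReal.ofReal (|fracInt h s f j| ^ q) ≤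
      ENNReal.ofReal (D * h ^ (2 * s)) ^ q * (∑' m, ww (1 - 1 / p + 1 / q) (j - m) * F m) ^ q := by
    intro j
    rw [← ENNReal.mul_rpow_of_nonneg _ _ hq0.le, ← ENNReal.ofReal_rpow_of_nonneg (abs_nonneg _) hq0.le]
    refine ENNReal.rpow_le_rpow (le_trans ?_ (hsum j)) hq0.le
    rw [← ENNReal.ofReal_tsum_of_nonneg (fun _ => abs_nonneg _) (hsummable j)]
    refine ENNReal.ofReal_le_ofReal ?_
    unfold fracInt
    have := norm_tsum_le_tsum_norm (f := fun m => Knsh h s (j - m) * f m) (by simpa only [Real.norm_eq_abs] using hsummable j)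
    simpa only [Real.norm_eq_abs] using this
  have htot : ∑' j, ENNReal.ofReal (|fracInt h s f j| ^ q) ≤
      ENNReal.ofReal ((D * h ^ (2 * s)) ^ q * (B * X ^ (q / p))) := by
    refine (ENNReal.tsum_le_tsum hbound).trans ?_
    rw [ENNReal.tsum_mul_left, ENNReal.ofReal_mul (p := (D * h ^ (2 * s)) ^ q) (by positivity),
      ENNReal.ofReal_mul hBpos.le,
      ENNReal.ofReal_rpow_of_nonneg hDh.le hq0.le]
    exact mul_le_mul_right (hT.trans (mul_le_mul_left hC0B _)) _
  have hreal : ∑' j, |fracInt h s f j| ^ q ≤ (D * h ^ (2 * s)) ^ q * (B * X ^ (q / p)) := by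
    have h2 : Summable fun j => |fracInt h s f j| ^ q := by
      have := ENNReal.summable_toReal (htot.trans_lt ENNReal.ofReal_lt_top).ne
      refine this.congr fun j => ?_
      exact ENNReal.toReal_ofReal (by positivity)
    rw [← ENNReal.ofReal_tsum_of_nonneg (fun j => by positivity) h2] at htot
    exact (ENNReal.ofReal_le_ofReal_iff (by positivity)).1 htot
  have hq1 : 0 ≤ 1 / q := by positivity
  calc (h * ∑' j : ℤ, |fracInt h s f j| ^ q) ^ (1/q)
      ≤ (h * ((D * h ^ (2 * s)) ^ q * (B * X ^ (q / p)))) ^ (1/q) := by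
        refine Real.rpow_le_rpow (mul_nonneg hh.le (tsum_nonneg fun j => by positivity)) ?_ hq1
        exact mul_le_mul_of_nonneg_left hreal hh.le
    _ = h ^ (1/q) * (D * h ^ (2 * s) * (B ^ (1/q) * X ^ (1/p))) := by
        rw [Real.mul_rpow hh.le (by positivity), Real.mul_rpow (by positivity) (by positivity),
          Real.mul_rpow hBpos.le (by positivity), ← Real.rpow_mul hDh.le, ← Real.rpow_mul hX0,
          mul_one_div_cancel hq0.ne', Real.rpow_one, show q / p * (1 / q) = 1 / p by field_simp]
    _ = D * B ^ (1/q) / h ^ (1/p - 2 * s - 1/q) * (h * X) ^ (1/p) := by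
        rw [Real.mul_rpow hh.le hX0]
        have : h ^ (1/p) = h ^ (1/q) * h ^ (2 * s) * h ^ (1/p - 2 * s - 1/q) := by
          rw [← Real.rpow_add hh, ← Real.rpow_add hh]; congr 1; ring
        rw [this]
        have : h ^ (1/p - 2 * s - 1/q) ≠ 0 := (Real.rpow_pos_of_pos hh _).ne'
        generalize h ^ (1/p - 2 * s - 1/q) = z at *
        field_simp
    _ ≤ _ := le_rfl
end

section
/- (Continuous Poisson problem.) Let 0<α<1 and 0<s<1 with α+2s<1. Let F:ℝ→ℝ be α-Hölder continuous with compact support contained in (−R₀,R₀), R₀>0, and define U(x) = A_{-s}·∫_ℝ F(y)/|x−y|^{1−2s} dy. Then: (1) U is bounded and U(x)→0 as |x|→∞; (2) U is (α+2s)-Hölder continuous and ‖U‖_{L^∞} + [U]_{C^{0,α+2s}} ≤ C·(‖F‖_{L^∞}+[F]_{C^{0,α}}) with C depending only on s, α and R₀; (3) for every x∈ℝ the integral A_s·∫_ℝ (U(x)−U(y))/|x−y|^{1+2s} dy converges absolutely and equals F(x). -/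
open MeasureTheory

/-- The normalizing constant `A_s = 4^s Γ(1/2+s)/(√π |Γ(-s)|)`, with `|Γ(-s)| = Γ(1-s)/s`. -/
noncomputable def As (s : ℝ) : ℝ :=
  (4 : ℝ) ^ s * Real.Gamma (1/2 + s) / (Real.sqrt Real.pi * (Real.Gamma (1 - s) / s))

/-- The normalizing constant `A_{-s} = 4^{-s} Γ(1/2-s)/(√π Γ(s))`. -/
noncomputable def Ans (s : ℝ) : ℝ :=
  (4 : ℝ) ^ (-s) * Real.Gamma (1/2 - s) / (Real.sqrt Real.pi * Real.Gamma s)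

/-- The candidate solution `U = (-Δ)^{-s}F`: `U(x) = A_{-s} ∫_ℝ F(y)/|x-y|^{1-2s} dy`. -/
noncomputable def Usol (s : ℝ) (F : ℝ → ℝ) (x : ℝ) : ℝ :=
  Ans s * ∫ y : ℝ, F y / |x - y| ^ (1 - 2 * s)


section helpers

open Set Filter Topology Real

/-- Two-power majorant: `r ^ a` for `r < 1`, `r ^ b` for `r ≥ 1`. -/
noncomputable def maj (a b r : ℝ) : ℝ := if r < 1 then r ^ a else r ^ b

lemma maj_nonneg {a b r : ℝ} (hr : 0 ≤ r) : 0 ≤ maj a b r := by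
  unfold maj; split_ifs <;> positivity

lemma maj_integrableOn {a b : ℝ} (ha : -1 < a) (hb : b < -1) :
    IntegrableOn (maj a b) (Ioi 0) := by
  have h1 : IntegrableOn (maj a b) (Ioo 0 1) := by
    have : IntegrableOn (fun x : ℝ => x ^ a) (Ioo 0 1) :=
      (intervalIntegral.integrableOn_Ioo_rpow_iff zero_lt_one).2 ha
    refine this.congr_fun ?_ measurableSet_Ioo
    intro x hx
    simp [maj, hx.2]
  have h2 : IntegrableOn (maj a b) (Ici 1) := by
    rw [integrableOn_Ici_iff_integrableOn_Ioi]
    have : IntegrableOn (fun x : ℝ => x ^ b) (Ioi 1) :=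
      integrableOn_Ioi_rpow_of_lt hb zero_lt_one
    refine this.congr_fun ?_ measurableSet_Ioi
    intro x hx
    have : ¬ x < 1 := not_lt.2 (le_of_lt hx)
    simp [maj, this]
  have := h1.union h2
  rwa [Ioo_union_Ici_eq_Ioi zero_lt_one] at this

lemma integrable_comp_abs_of {g : ℝ → ℝ} (hg : IntegrableOn g (Ioi 0)) :
    Integrable (fun w : ℝ => g |w|) := by
  have h : Integrable (indicator (Ioi 0) g) := (integrable_indicator_iff measurableSet_Ioi).2 hg
  have h2 := h.add h.comp_neg
  refine h2.congr ?_
  have h0 : ∀ᵐ w : ℝ, w ≠ 0 := by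
    simp [ae_iff]
  filter_upwards [h0] with w hw
  rcases lt_or_gt_of_ne hw with h | h
  · have : ¬ 0 < w := not_lt.2 h.le
    simp [indicator, h, this, abs_of_neg h]
  · have : ¬ w < 0 := not_lt.2 h.le
    simp [indicator, h, this, abs_of_pos h]

lemma maj_abs_integrable {a b : ℝ} (ha : -1 < a) (hb : b < -1) (x : ℝ) :
    Integrable (fun w : ℝ => maj a b |x - w|) :=
  (integrable_comp_abs_of (maj_integrableOn ha hb)).comp_sub_left x

lemma rpow_mul_maj {a b c r : ℝ} (hr : 0 < r) : r ^ c * maj a b r = maj (c + a) (c + b) r := by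
  unfold maj; split_ifs <;> rw [rpow_add hr]

lemma maj_zero_half_anti {t τ : ℝ} (ht : 0 ≤ t) (hτ : 0 < τ) :
    maj 0 (-1/2) (τ + t) ≤ maj 0 (-1/2) τ := by
  unfold maj
  split_ifs with h1 h2 h2
  · simp
  · exfalso; linarith
  · rw [rpow_zero]
    exact rpow_le_one_of_one_le_of_nonpos (not_lt.1 h1) (by norm_num)
  · exact rpow_le_rpow_of_nonpos hτ (by linarith) (by norm_num)

/-- the kernel -/
noncomputable def kap (s σ : ℝ) : ℝ := σ ^ (s - 1) - σ⁻¹ * (max (σ - 1) 0) ^ s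

lemma kap_bound {s σ : ℝ} (hs : 0 < s) (hs1 : s < 1) (hσ : 0 < σ) :
    |kap s σ| ≤ maj (s - 1) (s - 2) σ := by
  unfold kap maj
  split_ifs with h
  · rw [max_eq_right (by linarith), zero_rpow hs.ne', mul_zero, sub_zero,
      abs_of_nonneg (by positivity)]
  · have h : 1 ≤ σ := not_lt.1 h
    rw [max_eq_left (by linarith)]
    have e1 : σ ^ (s - 1) = σ⁻¹ * σ ^ s := by
      rw [rpow_sub hσ, rpow_one]; field_simp
    have e2 : σ ^ (s - 2) = σ⁻¹ * (σ ^ s * σ⁻¹) := by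
      rw [rpow_sub hσ]; norm_num; field_simp
    have e3 : (σ - 1) ^ s = σ ^ s * (1 - σ⁻¹) ^ s := by
      rw [← mul_rpow hσ.le (by rw [sub_nonneg]; exact inv_le_one_of_one_le₀ h)]
      congr 1; field_simp
    have hw0 : 0 ≤ 1 - σ⁻¹ := by rw [sub_nonneg]; exact inv_le_one_of_one_le₀ h
    have hw1 : 1 - σ⁻¹ ≤ 1 := by have := inv_pos.2 hσ; linarith
    have e4 : 1 - σ⁻¹ ≤ (1 - σ⁻¹) ^ s := by
      rcases hw0.eq_or_lt with h0 | h0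
      · rw [← h0, zero_rpow hs.ne']
      · simpa using rpow_le_rpow_of_exponent_ge h0 hw1 hs1.le
    have e5 : (1 - σ⁻¹) ^ s ≤ 1 := rpow_le_one hw0 hw1 hs.le
    have hp : 0 ≤ σ ^ s := by positivity
    have hi : 0 ≤ σ⁻¹ := by positivity
    rw [e1, e2, e3, ← mul_sub, abs_mul, abs_of_nonneg hi]
    apply mul_le_mul_of_nonneg_left _ hi
    rw [show σ ^ s - σ ^ s * (1 - σ⁻¹) ^ s = σ ^ s * (1 - (1 - σ⁻¹) ^ s) by ring, abs_mul,
      abs_of_nonneg hp]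
    apply mul_le_mul_of_nonneg_left _ hp
    rw [abs_of_nonneg (by linarith)]
    linarith

lemma kap_measurable (s : ℝ) : Measurable (kap s) := by
  unfold kap; fun_prop

lemma kap_integrableOn {s : ℝ} (hs : 0 < s) (hs1 : s < 1) : IntegrableOn (kap s) (Ioi 0) := by
  refine Integrable.mono' (maj_integrableOn (a := s - 1) (b := s - 2) (by linarith) (by linarith))
    (kap_measurable s).aestronglyMeasurable ?_
  filter_upwards [ae_restrict_mem measurableSet_Ioi] with σ hσ
  exact kap_bound hs hs1 hσ

lemma inner_integral {s ε σ : ℝ} (hs : 0 < s) (hε : 0 < ε) (h : ε < σ) :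
    ∫ t in Ioo ε σ, t ^ (-1 - s) * (σ - t) ^ (s - 1) = ε ^ (-s) * (σ⁻¹ * (σ - ε) ^ s) / s := by
  have hσ : 0 < σ := hε.trans h
  set g : ℝ → ℝ := fun t => -((s * σ)⁻¹ * (t ^ (-s) * (σ - t) ^ s))
  have hcont : ContinuousOn g (Icc ε σ) := by
    refine (ContinuousOn.mul continuousOn_const (ContinuousOn.mul ?_ ?_)).neg
    · exact continuousOn_id.rpow_const (fun x hx => Or.inl (hε.trans_le hx.1).ne')
    · exact (continuousOn_const.sub continuousOn_id).rpow_const (fun x hx => Or.inr hs.le)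
  have hd : ∀ t ∈ Ioo ε σ, HasDerivAt g (t ^ (-1 - s) * (σ - t) ^ (s - 1)) t := by
    intro t ht
    have ht0 : 0 < t := hε.trans ht.1
    have ht1 : 0 < σ - t := by linarith [ht.2]
    have d1 : HasDerivAt (fun t : ℝ => t ^ (-s)) (-s * t ^ (-s - 1)) t :=
      hasDerivAt_rpow_const (Or.inl ht0.ne')
    have d2 : HasDerivAt (fun t : ℝ => (σ - t) ^ s) (-1 * s * (σ - t) ^ (s - 1)) t :=
      ((hasDerivAt_id t).const_sub σ).rpow_const (Or.inl ht1.ne')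
    convert! ((d1.mul d2).const_mul ((s * σ)⁻¹)).neg using 1
    have e1 : t ^ (-s) = t * t ^ (-1 - s) := by
      rw [← rpow_one_add' ht0.le (by linarith)]; congr 1; ring
    have e2 : (σ - t) ^ s = (σ - t) * (σ - t) ^ (s - 1) := by
      rw [← rpow_one_add' ht1.le (by linarith)]; congr 1; ring
    rw [e1, e2, show -s - 1 = -1 - s by ring]
    field_simp
    ring
  have hpos : ∀ t ∈ Ioo ε σ, 0 ≤ t ^ (-1 - s) * (σ - t) ^ (s - 1) := by
    intro t ht
    have ht0 : 0 < t := hε.trans ht.1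
    have ht1 : 0 < σ - t := by linarith [ht.2]
    positivity
  have hInt := intervalIntegral.integrableOn_deriv_of_nonneg hcont hd hpos
  rw [← integral_Ioc_eq_integral_Ioo, ← intervalIntegral.integral_of_le h.le,
    intervalIntegral.integral_eq_sub_of_hasDerivAt_of_le h.le hcont hd
      ((intervalIntegrable_iff_integrableOn_Ioc_of_le h.le).2 hInt)]
  simp only [g, sub_self, zero_rpow hs.ne']
  field_simp
  ring

/-- Weyl fractional integral (without the Gamma factor). -/
noncomputable def Wf (s : ℝ) (p : ℝ → ℝ) (t : ℝ) : ℝ := ∫ τ in Ioi (0 : ℝ), p (τ + t) * τ ^ (s - 1)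

lemma Wf_integrand {s C : ℝ} {p : ℝ → ℝ} (hs : 0 < s) (hs2 : s < 1 / 2) (hp : Continuous p)
    (hb : ∀ τ, 0 < τ → |p τ| ≤ C * maj 0 (-1/2) τ) {t : ℝ} (ht : 0 ≤ t) :
    IntegrableOn (fun τ => p (τ + t) * τ ^ (s - 1)) (Ioi 0) := by
  have hC : 0 ≤ C := by
    have := (abs_nonneg _).trans (hb 1 one_pos)
    simpa [maj] using this
  refine Integrable.mono' ((maj_integrableOn (a := s - 1 + 0) (b := s - 1 + -1/2)
    (by linarith) (by linarith)).const_mul C) ?_ ?_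
  · exact ((hp.comp (continuous_id.add continuous_const)).measurable.mul
      (measurable_id.pow_const _)).aestronglyMeasurable
  · filter_upwards [ae_restrict_mem measurableSet_Ioi] with τ hτ
    have hτ : 0 < τ := hτ
    rw [← rpow_mul_maj hτ, norm_mul, norm_eq_abs, norm_eq_abs, abs_of_nonneg (rpow_nonneg hτ.le (s-1))]
    have h1 := (hb (τ + t) (by linarith)).trans
      (mul_le_mul_of_nonneg_left (maj_zero_half_anti ht hτ) hC)
    have := mul_le_mul_of_nonneg_right h1 (rpow_nonneg hτ.le (s - 1))
    linarith

lemma mar_trunc {s C : ℝ} {p : ℝ → ℝ} (hs : 0 < s) (hs2 : s < 1 / 2) (hp : Continuous p)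
    (hb : ∀ τ, 0 < τ → |p τ| ≤ C * maj 0 (-1/2) τ) {ε : ℝ} (hε : 0 < ε) :
    ∫ t in Ioi ε, t ^ (-1 - s) * (Wf s p 0 - Wf s p t)
      = (1 / s) * ∫ σ in Ioi (0 : ℝ), p (ε * σ) * kap s σ := by
  have hC : 0 ≤ C := by
    have := (abs_nonneg _).trans (hb 1 one_pos)
    simpa [maj] using this
  set f : ℝ → ℝ := indicator (Ioi ε) (fun t => t ^ (-1 - s)) with hf
  set g : ℝ → ℝ := indicator (Ioi 0) (fun τ => C * maj (s - 1 + 0) (s - 1 + -1/2) τ) with hg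
  set q : ℝ → ℝ := indicator (Ioi 0) (fun τ => τ ^ (s - 1)) with hq
  have hfon : IntegrableOn (fun t : ℝ => t ^ (-1 - s)) (Ioi ε) :=
    integrableOn_Ioi_rpow_of_lt (by linarith) hε
  have hfi : Integrable f := (integrable_indicator_iff measurableSet_Ioi).2 hfon
  have hgi : Integrable g := (integrable_indicator_iff measurableSet_Ioi).2
    ((maj_integrableOn (a := s - 1 + 0) (b := s - 1 + -1/2)
    (by linarith) (by linarith)).const_mul C)
  have hfm : Measurable f := (measurable_id.pow_const _).indicator measurableSet_Ioi
  have hqm : Measurable q := (measurable_id.pow_const _).indicator measurableSet_Ioi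
  have hf0 : ∀ t, 0 ≤ f t := fun t => indicator_nonneg (fun x hx => by
    have : 0 < x := hε.trans hx
    positivity) t
  have hq0 : ∀ t, 0 ≤ q t := fun t => indicator_nonneg (fun x hx => by
    have : 0 < x := hx
    positivity) t
  have hconv : Integrable (fun z : ℝ × ℝ => f z.2 * g (z.1 - z.2)) (volume.prod volume) :=
    hfi.convolution_integrand (ContinuousLinearMap.mul ℝ ℝ) hgi
  have hH : Integrable (fun z : ℝ × ℝ => f z.2 * (q (z.1 - z.2) * p z.1))
      (volume.prod volume) := by
    refine hconv.mono' ?_ ?_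
    · refine Measurable.aestronglyMeasurable ?_
      have := hp.measurable
      fun_prop
    · refine ae_of_all _ ?_
      rintro ⟨σ, t⟩
      simp only
      rw [norm_mul, norm_eq_abs, abs_of_nonneg (hf0 t)]
      by_cases htε : ε < t
      swap
      · have : f t = 0 := by simp [hf, htε]
        simp [this]
      apply mul_le_mul_of_nonneg_left _ (hf0 t)
      by_cases hst : 0 < σ - t
      swap
      · have h1 : q (σ - t) = 0 := indicator_of_notMem hst _
        have h2 : g (σ - t) = 0 := indicator_of_notMem hst _
        simp [h1, h2]
      · have h1 : q (σ - t) = (σ - t) ^ (s - 1) := indicator_of_mem (show σ - t ∈ Ioi 0 from hst) _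
        have h2 : g (σ - t) = _ := indicator_of_mem (show σ - t ∈ Ioi 0 from hst) _
        rw [h1, h2, ← rpow_mul_maj hst, norm_mul, norm_eq_abs, norm_eq_abs,
          abs_of_nonneg (rpow_nonneg hst.le _)]
        have ht0 : 0 < t := hε.trans htε
        have h3 := maj_zero_half_anti ht0.le hst
        rw [sub_add_cancel] at h3
        have h4 := (hb σ (by linarith)).trans (mul_le_mul_of_nonneg_left h3 hC)
        have := mul_le_mul_of_nonneg_left h4 (rpow_nonneg hst.le (s - 1))
        linarith
  have hI1 : ∀ t, ∫ σ, f t * (q (σ - t) * p σ) = f t * Wf s p t := by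
    intro t
    rw [integral_const_mul]
    congr 1
    have := integral_sub_right_eq_self (μ := volume) (fun τ => q τ * p (τ + t)) t
    simp only [sub_add_cancel] at this
    rw [this, Wf, ← integral_indicator measurableSet_Ioi]
    congr 1
    ext τ
    by_cases h : τ ∈ Ioi (0 : ℝ)
    · simp only [hq, indicator_of_mem h]; ring
    · simp only [hq, indicator_of_notMem h]; ring
  have hI2 : ∀ σ, ∫ t, f t * (q (σ - t) * p σ) =
      indicator (Ioi 0) (fun σ => p σ * (ε ^ (-s) * (σ⁻¹ * (max (σ - ε) 0) ^ s) / s)) σ := by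
    intro σ
    have e : ∀ t, f t * (q (σ - t) * p σ) =
        p σ * indicator (Ioo ε σ) (fun t => t ^ (-1 - s) * (σ - t) ^ (s - 1)) t := by
      intro t
      by_cases h1 : ε < t
      · by_cases h2 : t < σ
        · have h1' : t ∈ Ioi ε := h1
          have h2' : σ - t ∈ Ioi (0 : ℝ) := by simpa using h2
          simp only [hf, hq, indicator_of_mem h1', indicator_of_mem h2',
            indicator_of_mem (show t ∈ Ioo ε σ from ⟨h1, h2⟩)]
          ring
        · have h2' : σ - t ∉ Ioi (0 : ℝ) := by simpa using h2
          have h3 : t ∉ Ioo ε σ := fun h => h2 h.2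
          simp only [hq, indicator_of_notMem h2', indicator_of_notMem h3]
          ring
      · have h1' : t ∉ Ioi ε := h1
        have h3 : t ∉ Ioo ε σ := fun h => h1 h.1
        simp only [hf, indicator_of_notMem h1', indicator_of_notMem h3]
        ring
    simp only [e]
    rw [integral_const_mul, integral_indicator measurableSet_Ioo]
    by_cases h : ε < σ
    · rw [inner_integral hs hε h, indicator_of_mem (show σ ∈ Ioi (0:ℝ) from hε.trans h),
        max_eq_left (by linarith)]
    · rw [Ioo_eq_empty h]
      have : max (σ - ε) 0 = 0 := max_eq_right (by linarith)
      by_cases h0 : σ ∈ Ioi (0 : ℝ)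
      · simp [indicator_of_mem h0, this, zero_rpow hs.ne']
      · simp [indicator_of_notMem h0]
  have hswap : ∫ t, f t * Wf s p t = ∫ σ in Ioi (0:ℝ),
      p σ * (ε ^ (-s) * (σ⁻¹ * (max (σ - ε) 0) ^ s) / s) := by
    rw [← integral_indicator measurableSet_Ioi]
    have := integral_integral_swap (f := fun σ t => f t * (q (σ - t) * p σ)) hH
    simp only [hI1, hI2] at this
    exact this.symm
  have hInt1 : Integrable (fun t => f t * Wf s p t) := by
    have := hH.integral_prod_right
    simpa only [hI1] using this
  have hInt2 : IntegrableOn (fun σ =>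
      p σ * (ε ^ (-s) * (σ⁻¹ * (max (σ - ε) 0) ^ s) / s)) (Ioi 0) := by
    have := hH.integral_prod_left
    simp only [hI2] at this
    exact (integrable_indicator_iff measurableSet_Ioi).1 this
  have hfW : (fun t => f t * Wf s p t) = indicator (Ioi ε) (fun t => t ^ (-1 - s) * Wf s p t) := by
    ext t
    by_cases h : t ∈ Ioi ε
    · simp [hf, indicator_of_mem h]
    · simp [hf, indicator_of_notMem h]
  have hInt1' : IntegrableOn (fun t => t ^ (-1 - s) * Wf s p t) (Ioi ε) := by
    rw [hfW] at hInt1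
    exact (integrable_indicator_iff measurableSet_Ioi).1 hInt1
  rw [hfW, integral_indicator measurableSet_Ioi] at hswap
  have hW0 := Wf_integrand hs hs2 hp hb le_rfl
  simp only [mul_sub]
  rw [integral_sub (hfon.mul_const _) hInt1', hswap, integral_mul_const,
    integral_Ioi_rpow_of_lt (by linarith) hε]
  rw [show -1 - s + 1 = -s by ring, Wf, ← integral_const_mul,
    ← integral_sub (hW0.const_mul _) hInt2]
  have hsc := integral_comp_mul_left_Ioi' (fun σ => -ε ^ (-s) / -s * (p (σ + 0) * σ ^ (s - 1)) -
    p σ * (ε ^ (-s) * (σ⁻¹ * max (σ - ε) 0 ^ s) / s)) 0 hε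
  rw [mul_zero] at hsc
  rw [← hsc, smul_eq_mul, ← integral_const_mul, ← integral_const_mul]
  refine setIntegral_congr_fun measurableSet_Ioi ?_
  intro σ hσ
  have hσ : 0 < σ := hσ
  have e1 : max (ε * σ - ε) 0 = ε * max (σ - 1) 0 := by
    rw [mul_max_of_nonneg _ _ hε.le, mul_zero]; congr 1; ring
  simp only [kap]
  rw [e1, mul_rpow hε.le (le_max_right _ _), mul_rpow hε.le hσ.le, add_zero, rpow_neg hε.le,
    rpow_sub_one hε.ne']
  have : 0 < ε ^ s := by positivity
  field_simp

lemma mar_lim {s C : ℝ} {p : ℝ → ℝ} (hs : 0 < s) (hs2 : s < 1 / 2) (hp : Continuous p)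
    (hb : ∀ τ, 0 < τ → |p τ| ≤ C * maj 0 (-1/2) τ)
    (hi : IntegrableOn (fun t => t ^ (-1 - s) * (Wf s p 0 - Wf s p t)) (Ioi 0)) :
    ∫ t in Ioi (0 : ℝ), t ^ (-1 - s) * (Wf s p 0 - Wf s p t)
      = p 0 * ((1 / s) * ∫ σ in Ioi (0 : ℝ), kap s σ) := by
  have hC : 0 ≤ C := by
    have := (abs_nonneg _).trans (hb 1 one_pos)
    simpa [maj] using this
  have hpC : ∀ τ, 0 < τ → |p τ| ≤ C := by
    intro τ hτ
    refine (hb τ hτ).trans (mul_le_of_le_one_right hC ?_)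
    unfold maj
    split_ifs with h
    · simp
    · exact rpow_le_one_of_one_le_of_nonpos (not_lt.1 h) (by norm_num)
  set ε : ℕ → ℝ := fun n => 1 / ((n : ℝ) + 1) with hεd
  have hε : ∀ n, 0 < ε n := fun n => by positivity
  have hε0 : Tendsto ε atTop (𝓝 0) := tendsto_one_div_add_atTop_nhds_zero_nat
  have hun : ⋃ n, Ioi (ε n) = Ioi 0 := by
    ext x
    simp only [mem_iUnion, mem_Ioi]
    constructor
    · rintro ⟨n, hn⟩; exact (hε n).trans hn
    · intro hx; exact (exists_nat_one_div_lt hx)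
  have h1 := tendsto_setIntegral_of_monotone (μ := volume) (s := fun n => Ioi (ε n))
    (f := fun t => t ^ (-1 - s) * (Wf s p 0 - Wf s p t)) (fun n => measurableSet_Ioi)
    (by
      intro m n hmn
      apply Ioi_subset_Ioi
      exact one_div_le_one_div_of_le (by positivity) (by have : (m:ℝ) ≤ n := by exact_mod_cast hmn
                                                         linarith))
    (by rw [hun]; exact hi)
  rw [hun] at h1
  have h2 : Tendsto (fun n => ∫ σ in Ioi (0 : ℝ), p (ε n * σ) * kap s σ) atTop
      (𝓝 (∫ σ in Ioi (0 : ℝ), p 0 * kap s σ)) := by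
    refine tendsto_integral_of_dominated_convergence (fun σ => C * |kap s σ|) ?_ ?_ ?_ ?_
    · intro n
      exact ((hp.comp (continuous_const.mul continuous_id)).measurable.mul
        (kap_measurable s)).aestronglyMeasurable
    · exact (kap_integrableOn hs (by linarith)).abs.const_mul C
    · intro n
      filter_upwards [ae_restrict_mem measurableSet_Ioi] with σ hσ
      rw [norm_mul]
      exact mul_le_mul_of_nonneg_right (hpC _ (mul_pos (hε n) hσ)) (abs_nonneg _)
    · refine ae_of_all _ fun σ => ?_
      refine Tendsto.mul_const _ ?_
      have : Tendsto (fun n => ε n * σ) atTop (𝓝 0) := by simpa using hε0.mul_const σ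
      exact (hp.tendsto 0).comp this
  simp only [mar_trunc hs hs2 hp hb (hε _)] at h1
  have := tendsto_nhds_unique h1 (h2.const_mul (1 / s))
  rw [this, integral_const_mul]
  ring

lemma exp_marchaud {s : ℝ} (hs : 0 < s) (hs1 : s < 1) :
    IntegrableOn (fun t : ℝ => (1 - exp (-t)) * t ^ (-1 - s)) (Ioi 0) ∧
    ∫ t in Ioi (0 : ℝ), (1 - exp (-t)) * t ^ (-1 - s) = Gamma (1 - s) / s := by
  have hb0 : ∀ t : ℝ, 0 < t → 0 ≤ 1 - exp (-t) := fun t ht => by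
    have : exp (-t) ≤ 1 := exp_le_one_iff.2 (by linarith)
    linarith
  have hb1 : ∀ t : ℝ, 0 < t → 1 - exp (-t) ≤ t := fun t ht => by
    have := add_one_le_exp (-t); linarith
  have hb2 : ∀ t : ℝ, 0 < t → 1 - exp (-t) ≤ 1 := fun t ht => by
    have := exp_pos (-t); linarith
  have hI : IntegrableOn (fun t : ℝ => (1 - exp (-t)) * t ^ (-1 - s)) (Ioi 0) := by
    refine Integrable.mono' (maj_integrableOn (a := -s) (b := -1 - s) (by linarith) (by linarith))
      ?_ ?_
    · exact Measurable.aestronglyMeasurable (by fun_prop)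
    · filter_upwards [ae_restrict_mem measurableSet_Ioi] with t ht
      have ht : 0 < t := ht
      have hr := rpow_nonneg ht.le (-1 - s)
      rw [norm_eq_abs, abs_of_nonneg (mul_nonneg (hb0 t ht) hr)]
      unfold maj
      split_ifs
      · have e1 : t ^ (-s) = t * t ^ (-1 - s) := by
          rw [← rpow_one_add' ht.le (by linarith)]; congr 1; ring
        rw [e1]
        exact mul_le_mul_of_nonneg_right (hb1 t ht) hr
      · exact mul_le_of_le_one_left hr (hb2 t ht)
  refine ⟨hI, ?_⟩
  have hG : IntegrableOn (fun t : ℝ => exp (-t) * t ^ (-s)) (Ioi 0) := by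
    have := Real.GammaIntegral_convergent (s := 1 - s) (by linarith)
    simpa using this
  have key := integral_Ioi_mul_deriv_eq_deriv_mul (a := 0) (a' := 0) (b' := 0)
    (u := fun t : ℝ => 1 - exp (-t)) (u' := fun t => exp (-t))
    (v := fun t : ℝ => -(t ^ (-s)) / s) (v' := fun t => t ^ (-1 - s)) ?_ ?_ hI ?_ ?_ ?_
  · rw [key, Real.Gamma_eq_integral (by linarith), ← integral_div, sub_self, zero_sub, ← integral_neg]
    refine setIntegral_congr_fun measurableSet_Ioi ?_
    intro t ht
    simp only
    rw [show 1 - s - 1 = -s by ring]; ring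
  · intro t ht
    have := ((hasDerivAt_id t).neg.exp).const_sub 1
    simpa using this
  · intro t ht
    have ht : 0 < t := ht
    have := ((hasDerivAt_rpow_const (p := -s) (Or.inl ht.ne')).neg).div_const s
    convert! this using 1
    rw [show -s - 1 = -1 - s by ring]
    field_simp
  · have := (hG.div_const s).neg
    refine this.congr (ae_of_all _ fun t => ?_)
    simp; ring
  · have hz : Tendsto (fun t : ℝ => t ^ (1 - s) / s) (𝓝[>] 0) (𝓝 0) := by
      have : ContinuousAt (fun t : ℝ => t ^ (1 - s) / s) 0 :=
        (continuousAt_id.rpow_const (Or.inr (by linarith))).div_const s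
      have h := this.tendsto
      simp only [zero_rpow (show 1 - s ≠ 0 by linarith), zero_div] at h
      exact h.mono_left nhdsWithin_le_nhds
    refine squeeze_zero_norm' ?_ hz
    filter_upwards [self_mem_nhdsWithin] with t ht
    have ht : 0 < t := ht
    have hr := rpow_nonneg ht.le (-s)
    simp only [Pi.mul_apply]
    rw [norm_mul, norm_eq_abs, norm_eq_abs, abs_of_nonneg (hb0 t ht), abs_div, abs_neg,
      abs_of_nonneg hr, abs_of_pos hs, sub_eq_add_neg 1 s, rpow_one_add' ht.le (by linarith),
      ← mul_div_assoc]
    gcongr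
    exact hb1 t ht
  · have hz : Tendsto (fun t : ℝ => t ^ (-s) / s) atTop (𝓝 0) := by
      simpa using (tendsto_rpow_neg_atTop hs).div_const s
    refine squeeze_zero_norm' ?_ hz
    filter_upwards [eventually_gt_atTop 0] with t ht
    have hr := rpow_nonneg ht.le (-s)
    simp only [Pi.mul_apply]
    rw [norm_mul, norm_eq_abs, norm_eq_abs, abs_of_nonneg (hb0 t ht), abs_div, abs_neg,
      abs_of_nonneg hr, abs_of_pos hs]
    exact mul_le_of_le_one_left (by positivity) (hb2 t ht)

lemma kap_integral {s : ℝ} (hs : 0 < s) (hs2 : s < 1 / 2) :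
    (1 / s) * ∫ σ in Ioi (0 : ℝ), kap s σ = Gamma s * (Gamma (1 - s) / s) := by
  have hW : ∀ t, Wf s (fun τ => exp (-τ)) t = exp (-t) * Gamma s := by
    intro t
    rw [Wf, Real.Gamma_eq_integral hs, ← integral_const_mul]
    congr 1
    ext τ
    rw [neg_add, exp_add]; ring
  have hfun : (fun t : ℝ => t ^ (-1 - s) * (Wf s (fun τ => exp (-τ)) 0 - Wf s (fun τ => exp (-τ)) t))
      = fun t => Gamma s * ((1 - exp (-t)) * t ^ (-1 - s)) := by
    ext t; rw [hW, hW]; simp; ring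
  obtain ⟨h1, h2⟩ := exp_marchaud hs (by linarith : s < 1)
  have := mar_lim (C := 1) (p := fun τ => exp (-τ)) hs hs2 (by fun_prop) ?_ ?_
  · rw [hfun, integral_const_mul, h2] at this
    simpa using this.symm
  · intro τ hτ
    rw [abs_of_pos (exp_pos _), one_mul]
    unfold maj
    split_ifs with h
    · simpa using hτ.le
    · have h : 1 ≤ τ := not_lt.1 h
      rw [exp_neg, show (-1/2 : ℝ) = -(1/2) by ring, rpow_neg hτ.le]
      apply inv_anti₀ (by positivity)
      have a1 : τ ^ (1/2 : ℝ) ≤ τ := by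
        simpa using rpow_le_rpow_of_exponent_le h (show (1/2 : ℝ) ≤ 1 by norm_num)
      have := add_one_le_exp τ
      linarith
  · rw [hfun]; exact h1.const_mul _

lemma marchaud {s C : ℝ} {p : ℝ → ℝ} (hs : 0 < s) (hs2 : s < 1 / 2) (hp : Continuous p)
    (hb : ∀ τ, 0 < τ → |p τ| ≤ C * maj 0 (-1/2) τ)
    (hi : IntegrableOn (fun t => t ^ (-1 - s) * (Wf s p 0 - Wf s p t)) (Ioi 0)) :
    ∫ t in Ioi (0 : ℝ), t ^ (-1 - s) * (Wf s p 0 - Wf s p t)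
      = p 0 * (Gamma s * (Gamma (1 - s) / s)) := by
  rw [mar_lim hs hs2 hp hb hi, kap_integral hs hs2]

open ProbabilityTheory

noncomputable def hk (t z : ℝ) : ℝ := (√(4 * π * t))⁻¹ * exp (-z ^ 2 / (4 * t))

lemma hk_nonneg (t z : ℝ) : 0 ≤ hk t z := by unfold hk; positivity

lemma hk_measurable : Measurable (fun z : ℝ × ℝ => hk z.1 z.2) := by
  unfold hk; fun_prop

/-- Heat semigroup. -/
noncomputable def PF (F : ℝ → ℝ) (t x : ℝ) : ℝ := ∫ w, F (x + √(2 * t) * w) ∂(gaussianReal 0 1)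

lemma PF_gauss {F : ℝ → ℝ} (hF : Continuous F) {t : ℝ} (ht : 0 ≤ t) (x : ℝ) :
    PF F t x = ∫ y, F y ∂(gaussianReal x (2 * t).toNNReal) := by
  have h1 := gaussianReal_map_const_mul (μ := 0) (v := 1) (√(2 * t))
  have h2 := gaussianReal_map_const_add (μ := √(2 * t) * 0)
    (v := NNReal.mk ((√(2 * t)) ^ 2) (sq_nonneg _) * 1) x
  rw [← h1, Measure.map_map (by fun_prop) (by fun_prop)] at h2
  have e : NNReal.mk ((√(2 * t)) ^ 2) (sq_nonneg _) * 1 = (2 * t).toNNReal := by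
    ext
    rw [mul_one, Real.coe_toNNReal _ (show 0 ≤ 2 * t by linarith)]
    exact sq_sqrt (show 0 ≤ 2 * t by linarith)
  rw [e] at h2
  have e2 : x = √(2 * t) * 0 + x := by ring
  rw [PF]
  conv_rhs => rw [e2]
  rw [← h2, integral_map (by fun_prop) hF.aestronglyMeasurable]
  simp

lemma PF_kernel {F : ℝ → ℝ} (hF : Continuous F) {t : ℝ} (ht : 0 < t) (x : ℝ) :
    PF F t x = ∫ y, hk t (x - y) * F y := by
  have hv : (2 * t).toNNReal ≠ 0 := by
    have : 0 < (2 * t).toNNReal := Real.toNNReal_pos.2 (by linarith)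
    exact this.ne'
  rw [PF_gauss hF ht.le, integral_gaussianReal_eq_integral_smul hv]
  congr 1
  ext y
  rw [smul_eq_mul, gaussianPDFReal, hk, Real.coe_toNNReal _ (by linarith)]
  congr 3
  · congr 1; ring
  · rw [show (y - x) ^ 2 = (x - y) ^ 2 by ring]; congr 1; ring

lemma PF_zero (F : ℝ → ℝ) (x : ℝ) : PF F 0 x = F x := by simp [PF]

lemma PF_continuous {F : ℝ → ℝ} (hF : Continuous F) {M : ℝ} (hM : ∀ x, |F x| ≤ M) :
    Continuous (fun z : ℝ × ℝ => PF F z.1 z.2) := by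
  unfold PF
  refine continuous_of_dominated (bound := fun _ => M) ?_ ?_ ?_ ?_
  · intro z
    exact (hF.comp (by fun_prop)).aestronglyMeasurable
  · intro z; exact ae_of_all _ fun w => hM _
  · exact integrable_const M
  · exact ae_of_all _ fun w => hF.comp (by fun_prop)

lemma PF_bound {F : ℝ → ℝ} {M : ℝ} (hM : ∀ x, |F x| ≤ M) (t x : ℝ) : |PF F t x| ≤ M := by
  have := norm_integral_le_of_norm_le_const (μ := gaussianReal 0 1) (C := M)
    (f := fun w => F (x + √(2 * t) * w)) (ae_of_all _ (fun w => hM (x + √(2 * t) * w)))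
  simpa [PF] using this

lemma PF_decay {F : ℝ → ℝ} (hF : Continuous F) (hi : Integrable F) {t : ℝ} (ht : 0 < t) (x : ℝ) :
    |PF F t x| ≤ (∫ y, |F y|) * t ^ (-1/2 : ℝ) := by
  rw [PF_kernel hF ht, ← norm_eq_abs, mul_comm, ← integral_const_mul]
  refine norm_integral_le_of_norm_le (hi.abs.const_mul _) (ae_of_all _ fun y => ?_)
  rw [norm_mul, norm_eq_abs, norm_eq_abs, abs_of_nonneg (hk_nonneg _ _)]
  refine mul_le_mul_of_nonneg_right ?_ (abs_nonneg _)
  unfold hk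
  have h1 : exp (-(x - y) ^ 2 / (4 * t)) ≤ 1 := by
    rw [exp_le_one_iff, neg_div]
    have : 0 ≤ (x - y) ^ 2 / (4 * t) := by positivity
    linarith
  refine (mul_le_of_le_one_right (by positivity) h1).trans ?_
  rw [show (-1/2 : ℝ) = -(1/2) by ring, rpow_neg ht.le, ← sqrt_eq_rpow]
  apply inv_anti₀ (by positivity)
  apply sqrt_le_sqrt
  have := pi_gt_three
  nlinarith

lemma PF_semigroup {F : ℝ → ℝ} (hF : Continuous F) {M : ℝ} (hM : ∀ x, |F x| ≤ M) {t τ : ℝ}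
    (ht : 0 ≤ t) (hτ : 0 ≤ τ) (x : ℝ) :
    PF (PF F τ) t x = PF F (τ + t) x := by
  have hc : Continuous (PF F τ) := (PF_continuous hF hM).comp (by fun_prop : Continuous fun y : ℝ => (τ, y))
  have h := gaussianReal_conv_gaussianReal (m₁ := x) (m₂ := 0) (v₁ := (2 * t).toNNReal)
    (v₂ := (2 * τ).toNNReal)
  have e : (2 * t).toNNReal + (2 * τ).toNNReal = (2 * (τ + t)).toNNReal := by
    rw [← Real.toNNReal_add (by linarith) (by linarith)]; congr 1; ring
  rw [e, add_zero] at h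
  rw [PF_gauss hF (by linarith : 0 ≤ τ + t), ← h, integral_conv, PF_gauss hc ht]
  · congr 1
    ext y
    rw [PF_gauss hF hτ]
    have h2 := gaussianReal_map_const_add (μ := 0) (v := (2 * τ).toNNReal) y
    rw [zero_add] at h2
    rw [← h2, integral_map (by fun_prop) hF.aestronglyMeasurable]
  · rw [h]
    exact Integrable.of_bound hF.aestronglyMeasurable M (ae_of_all _ hM)

lemma hk_gamma {a r : ℝ} (ha : 0 < a) (hr : r ≠ 0) :
    IntegrableOn (fun t => t ^ (-a - 1/2) * hk t r) (Ioi 0) ∧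
    ∫ t in Ioi (0 : ℝ), t ^ (-a - 1/2) * hk t r
      = (√(4 * π))⁻¹ * 4 ^ a * Gamma a * |r| ^ (-2 * a) := by
  have hc : 0 < r ^ 2 / 4 := by positivity
  have h1 := Real.integral_rpow_mul_exp_neg_mul_Ioi ha hc
  have h2 := integral_comp_rpow_Ioi (fun t : ℝ => t ^ (a - 1) * exp (-(r ^ 2 / 4 * t)))
    (p := -1) (by norm_num)
  have hval : ∫ t in Ioi (0 : ℝ), t ^ (-a - 1/2) * hk t r
      = (√(4 * π))⁻¹ * 4 ^ a * Gamma a * |r| ^ (-2 * a) := by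
    rw [h1] at h2
    have e : (1 / (r ^ 2 / 4)) ^ a = 4 ^ a * |r| ^ (-2 * a) := by
      rw [one_div, inv_div, div_rpow (by norm_num) (by positivity), ← sq_abs, div_eq_mul_inv,
        ← rpow_natCast, ← rpow_mul (abs_nonneg r), ← rpow_neg (abs_nonneg r)]
      congr 2; push_cast; ring
    rw [e] at h2
    rw [show (√(4 * π))⁻¹ * 4 ^ a * Gamma a * |r| ^ (-2 * a)
      = (√(4 * π))⁻¹ * (4 ^ a * |r| ^ (-2 * a) * Gamma a) by ring, ← h2, ← integral_const_mul]
    refine setIntegral_congr_fun measurableSet_Ioi ?_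
    intro t ht
    have ht : 0 < t := ht
    simp only [hk, smul_eq_mul]
    have e1 : (√(4 * π * t))⁻¹ = (√(4 * π))⁻¹ * t ^ (-1/2 : ℝ) := by
      rw [sqrt_mul (by positivity), mul_inv, show (-1/2 : ℝ) = -(1/2) by ring, rpow_neg ht.le,
        ← sqrt_eq_rpow]
    have e2 : -(r ^ 2 / 4 * t ^ (-1 : ℝ)) = -r ^ 2 / (4 * t) := by
      rw [rpow_neg_one]; field_simp
    have e3 : (t ^ (-1 : ℝ)) ^ (a - 1) = t ^ (1 - a) := by
      rw [← rpow_mul ht.le]; congr 1; ring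
    have e4 : t ^ (-a - 1/2) * t ^ (-1/2 : ℝ) = t ^ (-1 - 1 : ℝ) * t ^ (1 - a) := by
      rw [← rpow_add ht, ← rpow_add ht]; congr 1; ring
    rw [e1, e2, e3, abs_neg, abs_one, one_mul]
    linear_combination (√(4 * π))⁻¹ * exp (-r ^ 2 / (4 * t)) * e4
  refine ⟨?_, hval⟩
  refine Integrable.of_integral_ne_zero ?_
  rw [hval]
  have := Gamma_pos_of_pos ha
  have := abs_pos.2 hr
  positivity

lemma heat_swap {a x : ℝ} (ha : 0 < a) {φ : ℝ → ℝ} (hφ : Measurable φ)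
    (hi : Integrable (fun y => φ y * |x - y| ^ (-2 * a))) :
    IntegrableOn (fun t => t ^ (-a - 1/2) * ∫ y, hk t (x - y) * φ y) (Ioi 0) ∧
    ∫ t in Ioi (0 : ℝ), t ^ (-a - 1/2) * ∫ y, hk t (x - y) * φ y
      = (√(4 * π))⁻¹ * 4 ^ a * Gamma a * ∫ y, φ y * |x - y| ^ (-2 * a) := by
  have h0 : ∀ᵐ y : ℝ, x - y ≠ 0 := by
    have : ∀ᵐ y : ℝ, y ≠ x := by simp [ae_iff]
    filter_upwards [this] with y hy
    exact sub_ne_zero.2 hy.symm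
  have hH : Integrable (fun z : ℝ × ℝ => φ z.1 * (z.2 ^ (-a - 1/2) * hk z.2 (x - z.1)))
      (volume.prod (volume.restrict (Ioi 0))) := by
    have hm : Measurable (fun z : ℝ × ℝ => φ z.1 * (z.2 ^ (-a - 1/2) * hk z.2 (x - z.1))) := by
      have := hk_measurable.comp (by fun_prop : Measurable fun z : ℝ × ℝ => (z.2, x - z.1))
      simp only [Function.comp_def] at this
      fun_prop
    rw [integrable_prod_iff hm.aestronglyMeasurable]
    constructor
    · filter_upwards [h0] with y hy
      exact ((hk_gamma ha hy).1).const_mul _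
    · refine (hi.abs.const_mul ((√(4 * π))⁻¹ * 4 ^ a * Gamma a)).congr ?_
      filter_upwards [h0] with y hy
      have e : ∫ t in Ioi (0 : ℝ), ‖φ y * (t ^ (-a - 1/2) * hk t (x - y))‖
          = ∫ t in Ioi (0 : ℝ), |φ y| * (t ^ (-a - 1/2) * hk t (x - y)) := by
        refine setIntegral_congr_fun measurableSet_Ioi ?_
        intro t ht
        have ht : 0 < t := ht
        simp only
        rw [norm_mul, norm_eq_abs, norm_eq_abs,
          abs_of_nonneg (mul_nonneg (rpow_nonneg ht.le _) (hk_nonneg _ _))]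
      rw [e, integral_const_mul, (hk_gamma ha hy).2, abs_mul,
        abs_of_nonneg (rpow_nonneg (abs_nonneg _) _)]
      ring
  have hin : ∀ t, ∫ y, φ y * (t ^ (-a - 1/2) * hk t (x - y))
      = t ^ (-a - 1/2) * ∫ y, hk t (x - y) * φ y := by
    intro t
    rw [← integral_const_mul]
    congr 1; ext y; ring
  constructor
  · have := hH.integral_prod_right
    simp only [hin] at this
    exact this
  · have := integral_integral_swap (f := fun y t => φ y * (t ^ (-a - 1/2) * hk t (x - y))) hH
    simp only [hin] at this
    rw [← this, ← integral_const_mul]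
    refine integral_congr_ae ?_
    filter_upwards [h0] with y hy
    rw [integral_const_mul, (hk_gamma ha hy).2]
    ring

lemma rpow_le_maj {c r : ℝ} (hc : c ≤ 0) : r ^ c ≤ maj c (-2) r + 1 := by
  unfold maj
  split_ifs with h
  · linarith
  · have h : 1 ≤ r := not_lt.1 h
    have h1 : r ^ c ≤ 1 := rpow_le_one_of_one_le_of_nonpos h hc
    have h2 : 0 ≤ r ^ (-2 : ℝ) := rpow_nonneg (by linarith) _
    linarith

lemma rpow_diff_aux {c u v : ℝ} (hc : -1 < c) (hc0 : c ≤ 0) (hu : 1 ≤ u) (huv : u ≤ v)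
    (hv : v ≤ u + 1) : |u ^ c - v ^ c| ≤ u ^ (c - 1) := by
  have hu0 : 0 < u := by linarith
  have h1 : v ^ c ≤ u ^ c := rpow_le_rpow_of_nonpos hu0 huv hc0
  rw [abs_of_nonneg (by linarith)]
  have h2 : (u + 1) ^ c ≤ v ^ c := rpow_le_rpow_of_nonpos (by linarith) hv hc0
  have e : (u + 1) ^ c = u ^ c * (1 + u⁻¹) ^ c := by
    rw [← mul_rpow hu0.le (by positivity)]; congr 1; field_simp
  have h3 : (1 + u⁻¹) ^ (-1 : ℝ) ≤ (1 + u⁻¹) ^ c :=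
    rpow_le_rpow_of_exponent_le (by have := inv_pos.2 hu0; linarith) hc.le
  have h4 : 1 - u⁻¹ ≤ (1 + u⁻¹) ^ (-1 : ℝ) := by
    rw [rpow_neg_one, ← one_div (1 + u⁻¹), le_div_iff₀ (by positivity)]
    nlinarith [inv_pos.2 hu0]
  rw [rpow_sub_one hu0.ne', div_eq_mul_inv]
  have h5 : 0 ≤ u ^ c := by positivity
  rw [e] at h2
  nlinarith

lemma rpow_diff {c w : ℝ} (hc : -1 < c) (hc0 : c ≤ 0) (hw : 2 ≤ |w|) :
    |(|1 - w| ^ c - |w| ^ c)| ≤ 4 * |w| ^ (c - 1) := by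
  have hw0 : 0 < |w| := by linarith
  have a1 : |1 - w| ≤ |w| + 1 := by
    have := abs_sub 1 w; rw [abs_one] at this; linarith
  have a2 : |w| - 1 ≤ |1 - w| := by
    have := abs_sub_abs_le_abs_sub w 1; rw [abs_one, abs_sub_comm] at this; linarith
  have key : ∀ u, |w| / 2 ≤ u → u ^ (c - 1) ≤ 4 * |w| ^ (c - 1) := by
    intro u hu
    refine (rpow_le_rpow_of_nonpos (by linarith) hu (by linarith)).trans ?_
    rw [div_rpow hw0.le (by norm_num), div_eq_mul_inv, mul_comm]
    apply mul_le_mul_of_nonneg_right _ (by positivity)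
    rw [← rpow_neg (by norm_num)]
    calc (2 : ℝ) ^ (-(c - 1)) ≤ 2 ^ (2 : ℝ) := rpow_le_rpow_of_exponent_le (by norm_num) (by linarith)
      _ = 4 := by norm_num
  rcases le_total |1 - w| |w| with h | h
  · exact (rpow_diff_aux hc hc0 (by linarith) h (by linarith)).trans (key _ (by linarith))
  · rw [abs_sub_comm]
    exact (rpow_diff_aux hc hc0 (by linarith) h (by linarith)).trans (key _ (by linarith))

lemma dk_integrable {a s : ℝ} (ha : 0 ≤ a) (hs : 0 < s) (has : a + 2 * s < 1) :
    Integrable (fun w : ℝ => |w| ^ a * |(|1 - w| ^ (2 * s - 1) - |w| ^ (2 * s - 1))|) := by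
  set c := 2 * s - 1 with hc
  have hm : Integrable (fun w : ℝ => 2 * (maj c (-2) |0 - w| + maj c (-2) |1 - w| +
      indicator (Icc (-2) 2) (fun _ => (2 : ℝ)) w) + 4 * maj 0 (a + c - 1) |0 - w|) := by
    refine ((((maj_abs_integrable (by linarith) (by norm_num) 0).add
      (maj_abs_integrable (by linarith) (by norm_num) 1)).add ?_).const_mul 2).add
      ((maj_abs_integrable (by linarith) (by linarith) 0).const_mul 4)
    exact (integrable_indicator_iff measurableSet_Icc).2 (by simp)
  refine hm.mono' (Measurable.aestronglyMeasurable (by fun_prop)) (ae_of_all _ fun w => ?_)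
  rw [norm_eq_abs, abs_of_nonneg (by positivity), zero_sub, abs_neg]
  have m1 : 0 ≤ maj c (-2) |w| := maj_nonneg (abs_nonneg w)
  have m2 : 0 ≤ maj c (-2) |1 - w| := maj_nonneg (abs_nonneg _)
  have m3 : 0 ≤ maj 0 (a + c - 1) |w| := maj_nonneg (abs_nonneg w)
  by_cases hw : |w| < 2
  · have hmem : w ∈ Icc (-2 : ℝ) 2 := by rw [abs_lt] at hw; exact ⟨hw.1.le, hw.2.le⟩
    rw [indicator_of_mem hmem]
    have h1 : |w| ^ a ≤ 2 := by
      calc |w| ^ a ≤ 2 ^ a := rpow_le_rpow (abs_nonneg _) hw.le ha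
        _ ≤ 2 ^ (1 : ℝ) := rpow_le_rpow_of_exponent_le (by norm_num) (by linarith)
        _ = 2 := by norm_num
    have h2 : |(|1 - w| ^ c - |w| ^ c)| ≤ |1 - w| ^ c + |w| ^ c := by
      have := abs_sub (|1 - w| ^ c) (|w| ^ c)
      rwa [abs_of_nonneg (rpow_nonneg (abs_nonneg (1 - w)) c),
        abs_of_nonneg (rpow_nonneg (abs_nonneg w) c)] at this
    have h3 := rpow_le_maj (c := c) (r := |1 - w|) (by linarith)
    have h4 := rpow_le_maj (c := c) (r := |w|) (by linarith)
    have h5 := mul_le_mul h1 h2 (abs_nonneg _) (by norm_num)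
    linarith
  · have hw : 2 ≤ |w| := not_lt.1 hw
    have hi : 0 ≤ indicator (Icc (-2) 2) (fun _ => (2 : ℝ)) w :=
      indicator_nonneg (fun _ _ => by norm_num) w
    have h1 := mul_le_mul_of_nonneg_left (rpow_diff (c := c) (by linarith) (by linarith) hw)
      (rpow_nonneg (abs_nonneg w) a)
    have h2 : maj 0 (a + c - 1) |w| = |w| ^ a * |w| ^ (c - 1) := by
      rw [maj, if_neg (by linarith), ← rpow_add (by linarith)]; congr 1; ring
    rw [h2] at m3 ⊢
    linarith

lemma Usol_eq (s : ℝ) (F : ℝ → ℝ) (x : ℝ) :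
    Usol s F x = Ans s * ∫ y : ℝ, F y * |x - y| ^ (2 * s - 1) := by
  unfold Usol
  congr 2
  ext y
  rw [show 2 * s - 1 = -(1 - 2 * s) by ring, rpow_neg (abs_nonneg _), div_eq_mul_inv]

lemma Ans_pos {s : ℝ} (hs : 0 < s) (hs2 : s < 1 / 2) : 0 < Ans s := by
  have h1 := Gamma_pos_of_pos hs
  have h2 : 0 < Gamma (1 / 2 - s) := Gamma_pos_of_pos (by linarith)
  unfold Ans
  positivity

section pot

variable {s α R₀ M L : ℝ} {F : ℝ → ℝ}

lemma pot_pointwise (hs2 : s < 1 / 2) (hM : ∀ x, |F x| ≤ M)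
    (hsupp : ∀ x : ℝ, x ∉ Ioo (-R₀) R₀ → F x = 0) (x y : ℝ) :
    ‖F y * |x - y| ^ (2 * s - 1)‖ ≤ M * (maj (2 * s - 1) (-2) |x - y|
      + indicator (Ioo (-R₀) R₀) (fun _ => (1 : ℝ)) y) := by
  have hM0 : 0 ≤ M := (abs_nonneg _).trans (hM 0)
  have hm : 0 ≤ maj (2 * s - 1) (-2) |x - y| := maj_nonneg (abs_nonneg _)
  rw [norm_mul, norm_eq_abs, norm_eq_abs, abs_of_nonneg (rpow_nonneg (abs_nonneg _) _)]
  by_cases hy : y ∈ Ioo (-R₀) R₀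
  · rw [indicator_of_mem hy]
    exact mul_le_mul (hM y) (rpow_le_maj (by linarith)) (by positivity) hM0
  · rw [indicator_of_notMem hy, hsupp y hy, abs_zero, zero_mul]
    positivity

lemma pot_maj_int (hs : 0 < s) (x : ℝ) :
    Integrable (fun y => M * (maj (2 * s - 1) (-2) |x - y|
      + indicator (Ioo (-R₀) R₀) (fun _ => (1 : ℝ)) y)) := by
  refine ((maj_abs_integrable (by linarith) (by norm_num) x).add ?_).const_mul M
  exact (integrable_indicator_iff measurableSet_Ioo).2 (by simp)

lemma pot_integrable (hs : 0 < s) (hs2 : s < 1 / 2) (hF : Continuous F) (hM : ∀ x, |F x| ≤ M)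
    (hsupp : ∀ x : ℝ, x ∉ Ioo (-R₀) R₀ → F x = 0) (x : ℝ) :
    Integrable (fun y => F y * |x - y| ^ (2 * s - 1)) := by
  refine (pot_maj_int (M := M) (R₀ := R₀) hs x).mono' ?_
    (ae_of_all _ (pot_pointwise hs2 hM hsupp x))
  have := hF.measurable
  exact Measurable.aestronglyMeasurable (by fun_prop)

lemma pot_bound (hs : 0 < s) (hs2 : s < 1 / 2) (hR : 0 < R₀) (hM : ∀ x, |F x| ≤ M)
    (hsupp : ∀ x : ℝ, x ∉ Ioo (-R₀) R₀ → F x = 0) (x : ℝ) :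
    |Usol s F x| ≤ Ans s * ((∫ w, maj (2 * s - 1) (-2) |w|) + 2 * R₀) * M := by
  rw [Usol_eq, abs_mul, abs_of_pos (Ans_pos hs hs2), mul_assoc]
  apply mul_le_mul_of_nonneg_left _ (Ans_pos hs hs2).le
  have h := norm_integral_le_of_norm_le (pot_maj_int (M := M) (R₀ := R₀) hs x)
    (ae_of_all _ (pot_pointwise hs2 hM hsupp x))
  rw [integral_const_mul, integral_add (maj_abs_integrable (by linarith) (by norm_num) x)
    ((integrable_indicator_iff measurableSet_Ioo).2 (by simp)),
    integral_indicator measurableSet_Ioo,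
    integral_sub_left_eq_self (fun w => maj (2 * s - 1) (-2) |w|) volume x] at h
  rw [norm_eq_abs] at h
  refine h.trans (le_of_eq ?_)
  rw [mul_comm]
  congr 2
  simp [Measure.real]
  rw [ENNReal.toReal_ofReal (by linarith)]
  ring

lemma pot_decay (hs : 0 < s) (hs2 : s < 1 / 2) (hM : ∀ x, |F x| ≤ M)
    (hsupp : ∀ x : ℝ, x ∉ Ioo (-R₀) R₀ → F x = 0) :
    Tendsto (Usol s F) (cocompact ℝ) (𝓝 0) := by
  have hM0 : 0 ≤ M := (abs_nonneg _).trans (hM 0)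
  have hlim : Tendsto (fun x : ℝ => Ans s * ((∫ y, indicator (Ioo (-R₀) R₀) (fun _ => (1 : ℝ)) y) *
      (M * (|x| - R₀) ^ (-(1 - 2 * s))))) (cocompact ℝ) (𝓝 0) := by
    have h1 : Tendsto (fun x : ℝ => |x| - R₀) (cocompact ℝ) atTop :=
      tendsto_atTop_add_const_right _ _ (tendsto_norm_cocompact_atTop (E := ℝ))
    have h2 := (tendsto_rpow_neg_atTop (show 0 < 1 - 2 * s by linarith)).comp h1
    have := ((h2.const_mul M).const_mul (∫ y, indicator (Ioo (-R₀) R₀) (fun _ => (1 : ℝ)) y)).const_mul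
      (Ans s)
    simpa using this
  refine squeeze_zero_norm' ?_ hlim
  have hev : ∀ᶠ x : ℝ in cocompact ℝ, R₀ < |x| :=
    (tendsto_norm_cocompact_atTop (E := ℝ)).eventually (eventually_gt_atTop R₀)
  filter_upwards [hev] with x hx
  rw [Usol_eq, norm_mul, norm_eq_abs, abs_of_pos (Ans_pos hs hs2), ← integral_mul_const]
  apply mul_le_mul_of_nonneg_left _ (Ans_pos hs hs2).le
  refine norm_integral_le_of_norm_le (Integrable.mul_const
    ((integrable_indicator_iff measurableSet_Ioo).2 (by simp)) _) (ae_of_all _ fun y => ?_)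
  rw [norm_mul, norm_eq_abs, norm_eq_abs, abs_of_nonneg (rpow_nonneg (abs_nonneg _) _)]
  by_cases hy : y ∈ Ioo (-R₀) R₀
  · rw [indicator_of_mem hy, one_mul, show 2 * s - 1 = -(1 - 2 * s) by ring]
    have hyR : |y| < R₀ := abs_lt.2 hy
    have h3 : |x| - R₀ ≤ |x - y| := by
      have := abs_sub_abs_le_abs_sub x y; linarith
    exact mul_le_mul (hM y) (rpow_le_rpow_of_nonpos (by linarith) h3 (by linarith))
      (by positivity) hM0
  · rw [indicator_of_notMem hy, hsupp y hy, abs_zero, zero_mul, zero_mul]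

lemma pot_holder (hα : 0 < α) (hs : 0 < s) (has : α + 2 * s < 1) (hF : Continuous F)
    (hM : ∀ x, |F x| ≤ M) (hL : ∀ x y : ℝ, |F x - F y| ≤ L * |x - y| ^ α)
    (hsupp : ∀ x : ℝ, x ∉ Ioo (-R₀) R₀ → F x = 0) (x y : ℝ) :
    |Usol s F x - Usol s F y| ≤ Ans s *
      (∫ w : ℝ, |w| ^ α * |(|1 - w| ^ (2 * s - 1) - |w| ^ (2 * s - 1))|) * L
        * |x - y| ^ (α + 2 * s) := by
  have hs2 : s < 1 / 2 := by linarith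
  rcases eq_or_ne x y with rfl | hxy
  · simp [zero_rpow (show α + 2 * s ≠ 0 by positivity)]
  set c := 2 * s - 1 with hc
  set h := y - x with hh
  have hh0 : h ≠ 0 := sub_ne_zero.2 hxy.symm
  have hhp : 0 < |h| := abs_pos.2 hh0
  set d : ℝ → ℝ := fun w => |1 - w| ^ c - |w| ^ c with hd
  set Φ : ℝ → ℝ := fun w => |w| ^ α * |d w| with hΦ
  have hdi : Integrable d := by
    have := dk_integrable (a := 0) le_rfl hs (by linarith)
    simp only [rpow_zero, one_mul] at this
    refine (integrable_norm_iff ?_).1 this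
    exact Measurable.aestronglyMeasurable (by fun_prop)
  have hΦi : Integrable Φ := dk_integrable hα.le hs has
  have hd0 : ∫ w, d w = 0 := by
    have h1 := integral_sub_left_eq_self d volume 1
    have h2 : (fun w => d (1 - w)) = fun w => - d w := by
      ext w; simp only [hd, sub_sub_cancel]; ring
    rw [h2, integral_neg] at h1
    linarith
  have hD : ∀ z, |y - z| ^ c - |x - z| ^ c = |h| ^ c * d ((z - x) / h) := by
    intro z
    have e1 : |y - z| = |h| * |1 - (z - x) / h| := by
      rw [← abs_mul]; congr 1; field_simp; ring
    have e2 : |x - z| = |h| * |(z - x) / h| := by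
      rw [← abs_mul, abs_sub_comm]; congr 1; field_simp
    rw [e1, e2, mul_rpow hhp.le (abs_nonneg _), mul_rpow hhp.le (abs_nonneg _)]
    ring
  have hDi : Integrable (fun z => d ((z - x) / h)) := (hdi.comp_div hh0).comp_sub_right x
  have hD0 : ∫ z, d ((z - x) / h) = 0 := by
    rw [integral_sub_right_eq_self (fun z => d (z / h)) x, Measure.integral_comp_div, hd0, smul_zero]
  have hΦDi : Integrable (fun z => Φ ((z - x) / h)) := (hΦi.comp_div hh0).comp_sub_right x
  have hΦD : ∫ z, Φ ((z - x) / h) = |h| * ∫ w, Φ w := by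
    rw [integral_sub_right_eq_self (fun z => Φ (z / h)) x, Measure.integral_comp_div, smul_eq_mul]
  have hFx := pot_integrable hs hs2 hF hM hsupp x
  have hFy := pot_integrable hs hs2 hF hM hsupp y
  rw [← hc] at hFx hFy
  have hdiff : (∫ z, F z * |y - z| ^ c) - (∫ z, F z * |x - z| ^ c)
      = ∫ z, |h| ^ c * ((F z - F x) * d ((z - x) / h)) := by
    have e : ∀ z, F z * |y - z| ^ c - F z * |x - z| ^ c
        = |h| ^ c * (F z * d ((z - x) / h)) := by
      intro z; rw [← mul_sub, hD]; ring
    have hFd : Integrable (fun z => |h| ^ c * (F z * d ((z - x) / h))) := by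
      exact (hFy.sub hFx).congr (ae_of_all _ e)
    rw [← integral_sub hFy hFx, integral_congr_ae (ae_of_all _ e)]
    have e' : ∀ z, |h| ^ c * ((F z - F x) * d ((z - x) / h))
        = |h| ^ c * (F z * d ((z - x) / h)) - |h| ^ c * F x * d ((z - x) / h) := by
      intro z; ring
    simp only [e']
    rw [integral_sub hFd (hDi.const_mul _), integral_const_mul (|h| ^ c * F x), hD0]
    ring
  have hest : |∫ z, |h| ^ c * ((F z - F x) * d ((z - x) / h))|
      ≤ ∫ z, |h| ^ c * (L * |h| ^ α * Φ ((z - x) / h)) := by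
    rw [← norm_eq_abs]
    refine norm_integral_le_of_norm_le ((hΦDi.const_mul _).const_mul _) (ae_of_all _ fun z => ?_)
    rw [norm_mul, norm_mul, norm_eq_abs, norm_eq_abs, norm_eq_abs,
      abs_of_nonneg (rpow_nonneg hhp.le c)]
    apply mul_le_mul_of_nonneg_left _ (rpow_nonneg hhp.le c)
    simp only [hΦ]
    have e2 : |z - x| ^ α = |h| ^ α * |(z - x) / h| ^ α := by
      rw [← mul_rpow hhp.le (abs_nonneg _), ← abs_mul]; congr 2; field_simp
    have h1 := mul_le_mul_of_nonneg_right (hL z x) (abs_nonneg (d ((z - x) / h)))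
    rw [e2] at h1
    linarith
  rw [integral_const_mul (|h| ^ c) (fun z => L * |h| ^ α * Φ ((z - x) / h)), integral_const_mul (L * |h| ^ α) (fun z => Φ ((z - x) / h)), hΦD] at hest
  rw [abs_sub_comm, Usol_eq, Usol_eq, ← mul_sub, abs_mul, abs_of_pos (Ans_pos hs hs2), hdiff,
    mul_assoc, mul_assoc]
  apply mul_le_mul_of_nonneg_left _ (Ans_pos hs hs2).le
  refine hest.trans (le_of_eq ?_)
  have e3 : |x - y| ^ (α + 2 * s) = |h| ^ c * |h| ^ α * |h| := by
    rw [abs_sub_comm, ← rpow_add hhp, ← rpow_add_one hhp.ne']; congr 1; rw [hc]; ring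
  rw [e3]
  ring

end pot

section main

variable {s α R₀ M L : ℝ} {F : ℝ → ℝ}

lemma F_continuous (hα : 0 < α) (hL : ∀ x y : ℝ, |F x - F y| ≤ L * |x - y| ^ α) :
    Continuous F := by
  rw [continuous_iff_continuousAt]
  intro x
  rw [ContinuousAt, tendsto_iff_norm_sub_tendsto_zero]
  have h : Tendsto (fun y : ℝ => L * |y - x| ^ α) (𝓝 x) (𝓝 0) := by
    have : Continuous (fun y : ℝ => L * |y - x| ^ α) :=
      continuous_const.mul ((by fun_prop : Continuous fun y : ℝ => |y - x|).rpow_const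
        (fun _ => Or.inr hα.le))
    have h := this.tendsto x
    simpa [zero_rpow hα.ne'] using h
  exact squeeze_zero (fun _ => norm_nonneg _) (fun y => hL y x) h

lemma PF_maj (hF : Continuous F) (hM : ∀ x, |F x| ≤ M) (hi : Integrable F) (x τ : ℝ) (hτ : 0 < τ) :
    |PF F τ x| ≤ (M + ∫ y, |F y|) * maj 0 (-1/2) τ := by
  have hM0 : 0 ≤ M := (abs_nonneg _).trans (hM 0)
  have hI0 : 0 ≤ ∫ y, |F y| := integral_nonneg fun _ => abs_nonneg _
  unfold maj
  split_ifs
  · have := PF_bound hM τ x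
    rw [rpow_zero]; linarith
  · have := PF_decay hF hi hτ x
    have h2 : 0 ≤ M * τ ^ (-1/2 : ℝ) := by positivity
    linarith

lemma U_heat (hs : 0 < s) (hs2 : s < 1 / 2) (hF : Continuous F) (hM : ∀ x, |F x| ≤ M)
    (hsupp : ∀ x : ℝ, x ∉ Ioo (-R₀) R₀ → F x = 0) (x : ℝ) :
    Gamma s * Usol s F x = ∫ τ in Ioi (0 : ℝ), PF F τ x * τ ^ (s - 1) := by
  have ha : 0 < 1 / 2 - s := by linarith
  have hi := pot_integrable hs hs2 hF hM hsupp x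
  have e : -2 * (1 / 2 - s) = 2 * s - 1 := by ring
  have := (heat_swap (x := x) ha hF.measurable (by rw [e]; exact hi)).2
  rw [e] at this
  rw [Usol_eq]
  have h2 : ∫ τ in Ioi (0 : ℝ), PF F τ x * τ ^ (s - 1)
      = ∫ t in Ioi (0 : ℝ), t ^ (-(1 / 2 - s) - 1/2) * ∫ y, hk t (x - y) * F y := by
    refine setIntegral_congr_fun measurableSet_Ioi ?_
    intro t ht
    simp only
    rw [PF_kernel hF ht, mul_comm, show -(1 / 2 - s) - 1/2 = s - 1 by ring]
  rw [h2, this, ← mul_assoc]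
  congr 1
  have hg := Gamma_pos_of_pos hs
  have h4 : √(4 * π) = 2 * √π := by
    rw [sqrt_mul (by norm_num), show (4 : ℝ) = 2 ^ 2 by norm_num, sqrt_sq (by norm_num)]
  have h5 : (4 : ℝ) ^ (1 / 2 - s) = 2 * 4 ^ (-s) := by
    rw [sub_eq_add_neg, rpow_add (by norm_num), ← sqrt_eq_rpow,
      show √(4 : ℝ) = 2 by rw [show (4 : ℝ) = 2 ^ 2 by norm_num, sqrt_sq (by norm_num)]]
  rw [h4, h5, Ans]
  field_simp

lemma U_semigroup (hs : 0 < s) (hs2 : s < 1 / 2) (hF : Continuous F) (hM : ∀ x, |F x| ≤ M)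
    (hi : Integrable F) (hsupp : ∀ x : ℝ, x ∉ Ioo (-R₀) R₀ → F x = 0) (x : ℝ) {t : ℝ} (ht : 0 ≤ t) :
    Gamma s * PF (Usol s F) t x = Wf s (fun τ => PF F τ x) t := by
  have hH : Integrable (fun z : ℝ × ℝ => PF F z.2 (x + √(2 * t) * z.1) * z.2 ^ (s - 1))
      ((gaussianReal 0 1).prod (volume.restrict (Ioi 0))) := by
    have hb := (integrable_const (μ := gaussianReal 0 1) (1 : ℝ)).mul_prod
      ((maj_integrableOn (a := s - 1 + 0) (b := s - 1 + -1/2)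
      (by linarith) (by linarith)).const_mul (M + ∫ y, |F y|))
    refine hb.mono' ?_ ?_
    · have h1 := ((PF_continuous hF hM).comp
        (by fun_prop : Continuous fun z : ℝ × ℝ => (z.2, x + √(2 * t) * z.1))).measurable
      simp only [Function.comp_def] at h1
      exact Measurable.aestronglyMeasurable (by fun_prop)
    · have hpos : ∀ᵐ z ∂((gaussianReal 0 1).prod (volume.restrict (Ioi (0:ℝ)))), 0 < z.2 :=
        Measure.quasiMeasurePreserving_snd.ae (ae_restrict_mem measurableSet_Ioi)
      filter_upwards [hpos] with z hz
      rw [← rpow_mul_maj hz, norm_mul, norm_eq_abs, norm_eq_abs,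
        abs_of_nonneg (rpow_nonneg hz.le _)]
      have := mul_le_mul_of_nonneg_right (PF_maj hF hM hi (x + √(2 * t) * z.1) z.2 hz)
        (rpow_nonneg hz.le (s - 1))
      linarith
  have hsw := integral_integral_swap
    (f := fun w τ => PF F τ (x + √(2 * t) * w) * τ ^ (s - 1)) hH
  rw [PF, ← integral_const_mul, Wf]
  simp only [U_heat hs hs2 hF hM hsupp]
  rw [hsw]
  refine setIntegral_congr_fun measurableSet_Ioi ?_
  intro τ hτ
  have hτ : 0 < τ := hτ
  simp only
  rw [integral_mul_const, ← PF_semigroup hF hM ht hτ.le x]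
  rfl

lemma U_int {β B x : ℝ} {U : ℝ → ℝ} (hs : 0 < s) (hβ : 2 * s < β) (hU : Continuous U)
    (hB : ∀ x, |U x| ≤ B) (hh : ∀ x y, |U x - U y| ≤ L * |x - y| ^ β) :
    Integrable (fun y => (U x - U y) * |x - y| ^ (-2 * (1 / 2 + s))) := by
  have hB0 : 0 ≤ B := (abs_nonneg _).trans (hB 0)
  have hL0 : 0 ≤ L := by
    have := (abs_nonneg _).trans (hh 0 1)
    simpa using this
  have e : -2 * (1 / 2 + s) = -1 - 2 * s := by ring
  rw [e]
  refine Integrable.mono' ((maj_abs_integrable (a := β + (-1 - 2 * s)) (b := 0 + (-1 - 2 * s))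
    (by linarith) (by linarith) x).const_mul (L + 2 * B)) ?_ ?_
  · have := hU.measurable
    exact Measurable.aestronglyMeasurable (by fun_prop)
  · have h0 : ∀ᵐ y : ℝ, y ≠ x := by simp [ae_iff]
    filter_upwards [h0] with y hy
    have hp : 0 < |x - y| := abs_pos.2 (sub_ne_zero.2 hy.symm)
    have hr := rpow_nonneg hp.le (-1 - 2 * s)
    rw [norm_mul, norm_eq_abs, norm_eq_abs, abs_of_nonneg hr]
    unfold maj
    split_ifs
    · rw [rpow_add hp, ← mul_assoc]
      refine mul_le_mul_of_nonneg_right ((hh x y).trans ?_) hr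
      refine mul_le_mul_of_nonneg_right (by linarith) (by positivity)
    · rw [zero_add]
      refine mul_le_mul_of_nonneg_right ?_ hr
      have := abs_sub (U x) (U y)
      have := hB x
      have := hB y
      linarith

lemma part3 {β B K x : ℝ} (hs : 0 < s) (hs2 : s < 1 / 2) (hβ : 2 * s < β) (hF : Continuous F)
    (hM : ∀ x, |F x| ≤ M) (hi : Integrable F) (hsupp : ∀ x : ℝ, x ∉ Ioo (-R₀) R₀ → F x = 0)
    (hB : ∀ x, |Usol s F x| ≤ B) (hh : ∀ x y, |Usol s F x - Usol s F y| ≤ K * |x - y| ^ β) :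
    Integrable (fun y : ℝ => (Usol s F x - Usol s F y) / |x - y| ^ (1 + 2 * s)) ∧
        As s * ∫ y : ℝ, (Usol s F x - Usol s F y) / |x - y| ^ (1 + 2 * s) = F x := by
  have hU : Continuous (Usol s F) := F_continuous (by linarith) hh
  have hInt := U_int (x := x) hs hβ hU hB hh
  have e : (fun y : ℝ => (Usol s F x - Usol s F y) / |x - y| ^ (1 + 2 * s))
      = fun y => (Usol s F x - Usol s F y) * |x - y| ^ (-2 * (1 / 2 + s)) := by
    ext y
    rw [show -2 * (1 / 2 + s) = -(1 + 2 * s) by ring, rpow_neg (abs_nonneg _), div_eq_mul_inv]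
  rw [e]
  refine ⟨hInt, ?_⟩
  obtain ⟨h1, h2⟩ := heat_swap (a := 1 / 2 + s) (x := x) (by linarith)
    (φ := fun y => Usol s F x - Usol s F y) (by have := hU.measurable; fun_prop) hInt
  set p : ℝ → ℝ := fun τ => PF F τ x with hp
  have hg := Gamma_pos_of_pos hs
  have hpt : EqOn (fun t : ℝ => t ^ (-(1 / 2 + s) - 1 / 2) *
      ∫ y, hk t (x - y) * (Usol s F x - Usol s F y))
      (fun t => (Gamma s)⁻¹ * (t ^ (-1 - s) * (Wf s p 0 - Wf s p t))) (Ioi 0) := by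
    intro t ht
    have ht : 0 < t := ht
    simp only
    rw [← PF_kernel (F := fun y => Usol s F x - Usol s F y) (by fun_prop) ht,
      ← U_semigroup hs hs2 hF hM hi hsupp x le_rfl, ← U_semigroup hs hs2 hF hM hi hsupp x ht.le,
      PF_zero, show -(1 / 2 + s) - 1 / 2 = -1 - s by ring]
    have : PF (fun y => Usol s F x - Usol s F y) t x = Usol s F x - PF (Usol s F) t x := by
      unfold PF
      rw [integral_sub (integrable_const _)]
      · simp
      · exact Integrable.of_bound (hU.comp (by fun_prop)).aestronglyMeasurable B
          (ae_of_all _ fun w => hB _)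
    rw [this]
    field_simp
  have h1' := (integrableOn_congr_fun hpt measurableSet_Ioi).1 h1
  have h1'' : IntegrableOn (fun t => t ^ (-1 - s) * (Wf s p 0 - Wf s p t)) (Ioi 0) := by
    have := h1'.const_mul (Gamma s)
    refine this.congr (ae_of_all _ fun t => ?_)
    simp only
    field_simp
  rw [setIntegral_congr_fun measurableSet_Ioi hpt, integral_const_mul,
    marchaud (p := p) hs hs2 (C := M + ∫ y, |F y|)
      ((PF_continuous hF hM).comp (by fun_prop : Continuous fun τ : ℝ => (τ, x)))
      (PF_maj hF hM hi x) h1''] at h2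
  have hp0 : p 0 = F x := PF_zero F x
  rw [hp0] at h2
  set I := ∫ y, (Usol s F x - Usol s F y) * |x - y| ^ (-2 * (1 / 2 + s)) with hI
  have hg2 : 0 < Gamma (1 / 2 + s) := Gamma_pos_of_pos (by linarith)
  have hg3 : 0 < Gamma (1 - s) := Gamma_pos_of_pos (by linarith)
  have h4 : √(4 * π) = 2 * √π := by
    rw [sqrt_mul (by norm_num), show (4 : ℝ) = 2 ^ 2 by norm_num, sqrt_sq (by norm_num)]
  have h5 : (4 : ℝ) ^ (1 / 2 + s) = 2 * 4 ^ s := by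
    rw [rpow_add (by norm_num), ← sqrt_eq_rpow,
      show √(4 : ℝ) = 2 by rw [show (4 : ℝ) = 2 ^ 2 by norm_num, sqrt_sq (by norm_num)]]
  rw [h4, h5] at h2
  rw [As]
  have hpi : 0 < √π := by positivity
  field_simp at h2 ⊢
  linarith

end main

end helpers

/-- The continuous Poisson problem `(-Δ)^s U = F` on `ℝ`:
(1) `U = (-Δ)^{-s}F` vanishes at infinity; (2) `U` is bounded, `(α+2s)`-Hölder and
`‖U‖_∞ + [U]_{C^{0,α+2s}} ≤ C (‖F‖_∞ + [F]_{C^{0,α}})` with `C = C(s,α,R₀)`;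
(3) `(-Δ)^s U(x)` is given by an absolutely convergent integral which equals `F(x)`. -/
theorem continuous_Poisson_problem (α s R₀ : ℝ)
    (hα0 : 0 < α) (hα1 : α < 1) (hs0 : 0 < s) (hs1 : s < 1)
    (hsum : α + 2 * s < 1) (hR₀ : 0 < R₀) :
    ∃ C : ℝ, 0 < C ∧ ∀ F : ℝ → ℝ, ∀ MF LF : ℝ,
      (∀ x : ℝ, |F x| ≤ MF) →
      (∀ x y : ℝ, |F x - F y| ≤ LF * |x - y| ^ α) →
      (∀ x : ℝ, x ∉ Set.Ioo (-R₀) R₀ → F x = 0) →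
      Filter.Tendsto (Usol s F) (Filter.cocompact ℝ) (nhds 0) ∧
      (∀ x : ℝ, |Usol s F x| ≤ C * (MF + LF)) ∧
      (∀ x y : ℝ, |Usol s F x - Usol s F y| ≤ C * (MF + LF) * |x - y| ^ (α + 2 * s)) ∧
      (∀ x : ℝ,
        Integrable (fun y : ℝ => (Usol s F x - Usol s F y) / |x - y| ^ (1 + 2 * s)) ∧
        As s * ∫ y : ℝ, (Usol s F x - Usol s F y) / |x - y| ^ (1 + 2 * s) = F x) := by
  have hs2 : s < 1 / 2 := by linarith
  have hA := Ans_pos hs0 hs2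
  set J := ∫ w : ℝ, maj (2 * s - 1) (-2) |w| with hJ
  set K := ∫ w : ℝ, |w| ^ α * |(|1 - w| ^ (2 * s - 1) - |w| ^ (2 * s - 1))| with hK
  have hJ0 : 0 ≤ J := MeasureTheory.integral_nonneg fun w => maj_nonneg (abs_nonneg w)
  have hK0 : 0 ≤ K := MeasureTheory.integral_nonneg fun w => by positivity
  have hc1 : 0 ≤ Ans s * (J + 2 * R₀) := by positivity
  have hc2 : 0 ≤ Ans s * K := by positivity
  refine ⟨Ans s * (J + 2 * R₀) + Ans s * K + 1, by linarith, ?_⟩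
  intro F MF LF hM hL hsupp
  have hM0 : 0 ≤ MF := (abs_nonneg _).trans (hM 0)
  have hL0 : 0 ≤ LF := by
    have := (abs_nonneg _).trans (hL 0 1)
    simpa using this
  have hF := F_continuous hα0 hL
  have hFi : Integrable F := by
    refine hF.integrable_of_hasCompactSupport ?_
    refine HasCompactSupport.intro (isCompact_Icc (a := -R₀) (b := R₀)) fun x hx => hsupp x ?_
    exact fun h => hx ⟨h.1.le, h.2.le⟩
  have hb : ∀ x, |Usol s F x| ≤ (Ans s * (J + 2 * R₀) + Ans s * K + 1) * (MF + LF) := by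
    intro x
    have h := pot_bound hs0 hs2 hR₀ hM hsupp x
    rw [← hJ] at h
    refine h.trans (mul_le_mul ?_ ?_ hM0 ?_) <;> linarith
  have hh : ∀ x y, |Usol s F x - Usol s F y|
      ≤ (Ans s * (J + 2 * R₀) + Ans s * K + 1) * (MF + LF) * |x - y| ^ (α + 2 * s) := by
    intro x y
    have h := pot_holder hα0 hs0 hsum hF hM hL hsupp x y
    rw [← hK] at h
    refine h.trans (mul_le_mul_of_nonneg_right (mul_le_mul ?_ ?_ hL0 ?_) (by positivity)) <;>
      linarith
  exact ⟨pot_decay hs0 hs2 hM hsupp, hb, hh,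
    fun x => part3 hs0 hs2 (by linarith) hF hM hFi hsupp hb hh⟩
end
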